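/- arXiv:2309.00365 — 2 statements merged into one kernel-verified Lean document; each statement's English description precedes it below -/
import Mathlib

section
/- The radius of convergence of the power series Σₙ Cₙ Mₙ(λ) tⁿ, where G_λ(t) = (1 − 2(1−e^λ)t − √(4(1−e^{2λ})t² − 4t + 1)) / (2 e^λ t), equals 1/(2(e^λ+1)) for every real λ. -/
/-! Let `x = exp λ` and let `coef x n` (`n ≥ 1`) be the sum of `x ^ apm σ` over the 231-avoiding
permutations `σ` of `n` letters, that is `Cₙ Mₙ(λ)`.

A 231-avoiding word with maximum letter `m` is `L ++ m :: R` with `L`, `R` both 231-avoiding and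
every letter of `L` below every letter of `R` (`exists_of_mem`, `join_mem`). The longest subsequence
of shape `a₀ < b₀ > a₁ < b₁ > ⋯ > aₚ` in this word has length `A(L) + A(R)`, increased by one when
`L` and `R` are both nonempty or both empty (`udLen_append`): if both are nonempty, optimal
subsequences of `L` and `R` can be joined through `m`, and any such subsequence of the whole word
restricts to one of `L` and one of `R` at the cost of a single letter. Hence (`coef_succ`) the series
`H(t) = ∑ₙ coef x n tⁿ` satisfies `H = t (x + 2 H + x H²)`.

The radius follows without solving the quadratic. If `0 ≤ 2t(x + 1) ≤ 1`, then `S ≤ 1` implies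
`t (x + 2S + x S²) ≤ 2t(x + 1) ≤ 1`, so all partial sums are at most `1` (`partial_le`). If
`2t(x + 1) > 1` and `H(t)` converged to `S`, then `S > 0`, and `S² + 1 ≥ 2S` gives
`S = t (2S + x (S² + 1)) ≥ 2t(x + 1) S > S`, which is absurd (`coef_not_summable`). -/

open Equiv Filter Real Set

def Contains {n m : ℕ} (σ : Equiv.Perm (Fin n)) (η : Equiv.Perm (Fin m)) : Prop :=
  ∃ f : Fin m → Fin n, StrictMono f ∧ ∀ j k, σ (f j) < σ (f k) ↔ η j < η k

def Avoids {n m : ℕ} (σ : Equiv.Perm (Fin n)) (η : Equiv.Perm (Fin m)) : Prop := ¬ Contains σ η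

def Avoids231 {n : ℕ} (σ : Equiv.Perm (Fin n)) : Prop :=
  ¬ ∃ i₁ i₂ i₃ : Fin n, i₁ < i₂ ∧ i₂ < i₃ ∧ σ i₃ < σ i₁ ∧ σ i₁ < σ i₂

def Avoids132 {n : ℕ} (σ : Equiv.Perm (Fin n)) : Prop :=
  ¬ ∃ i₁ i₂ i₃ : Fin n, i₁ < i₂ ∧ i₂ < i₃ ∧ σ i₁ < σ i₃ ∧ σ i₃ < σ i₂

def Avoids213 {n : ℕ} (σ : Equiv.Perm (Fin n)) : Prop :=
  ¬ ∃ i₁ i₂ i₃ : Fin n, i₁ < i₂ ∧ i₂ < i₃ ∧ σ i₂ < σ i₁ ∧ σ i₁ < σ i₃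

def Avoids312 {n : ℕ} (σ : Equiv.Perm (Fin n)) : Prop :=
  ¬ ∃ i₁ i₂ i₃ : Fin n, i₁ < i₂ ∧ i₂ < i₃ ∧ σ i₂ < σ i₃ ∧ σ i₃ < σ i₁

/-- `f` indexes an alternating subsequence of `σ`. -/
def IsAltSub {n k : ℕ} (σ : Equiv.Perm (Fin n)) (f : Fin k → Fin n) : Prop :=
  StrictMono f ∧ ∀ (j : ℕ) (h : j + 2 < k),
    (σ (f ⟨j, by omega⟩) < σ (f ⟨j + 1, by omega⟩) ↔
      ¬ σ (f ⟨j + 1, by omega⟩) < σ (f ⟨j + 2, by omega⟩))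

/-- The length of the longest alternating subsequence. -/
noncomputable def altLen {n : ℕ} (σ : Equiv.Perm (Fin n)) : ℕ :=
  sSup {k | ∃ f : Fin k → Fin n, IsAltSub σ f}

/-- `f` indexes an alternating subsequence beginning with an ascent and ending with a descent. -/
def IsAltPM {n k : ℕ} (σ : Equiv.Perm (Fin n)) (f : Fin k → Fin n) : Prop :=
  IsAltSub σ f ∧ 3 ≤ k ∧ Odd k ∧
    (∀ (h : 3 ≤ k), σ (f ⟨0, by omega⟩) < σ (f ⟨1, by omega⟩)) ∧
    (∀ (h : 3 ≤ k), σ (f ⟨k - 1, by omega⟩) < σ (f ⟨k - 2, by omega⟩))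

/-- The length `A^{+,-}` of the longest alternating subsequence beginning with an ascent and
ending with a descent; `1` if there is no such subsequence, and `0` when `n = 0`. -/
noncomputable def apm {n : ℕ} (σ : Equiv.Perm (Fin n)) : ℕ :=
  if n = 0 then 0 else max (sSup {k | ∃ f : Fin k → Fin n, IsAltPM σ f}) 1

/-- The length of the longest increasing subsequence. -/
noncomputable def lisLen {n : ℕ} (σ : Equiv.Perm (Fin n)) : ℕ :=
  sSup {k | ∃ f : Fin k → Fin n, StrictMono f ∧ StrictMono (⇑σ ∘ f)}

open scoped Classical in
/-- The moment generating function of `A_n` under the uniform 231-avoiding measure. -/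
noncomputable def Malt (n : ℕ) (lam : ℝ) : ℝ :=
  (∑ σ ∈ Finset.univ.filter (fun σ : Equiv.Perm (Fin n) => Avoids231 σ),
    Real.exp (lam * altLen σ)) / (catalan n)

open scoped Classical in
noncomputable def Mapm (n : ℕ) (lam : ℝ) : ℝ :=
  (∑ σ ∈ Finset.univ.filter (fun σ : Equiv.Perm (Fin n) => Avoids231 σ),
    Real.exp (lam * apm σ)) / (catalan n)

open scoped Classical in
noncomputable def Minc (n : ℕ) (lam : ℝ) : ℝ :=
  (∑ σ ∈ Finset.univ.filter (fun σ : Equiv.Perm (Fin n) => Avoids231 σ),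
    Real.exp (lam * lisLen σ)) / (catalan n)

/-! ### Up-down words -/

/-- The word has odd length and alternates as `a₀ < b₀ > a₁ < b₁ > ⋯ > aₚ`. A one-letter word
qualifies, which accounts for the convention that `apm` is at least `1` for `n ≥ 1`. -/
def UD : List ℕ → Prop
  | [] => False
  | [_] => True
  | [_, _] => False
  | a :: b :: c :: t => a < b ∧ c < b ∧ UD (c :: t)

/-- A word avoids the pattern 231. -/
def Av (l : List ℕ) : Prop := ∀ a b c, [a, b, c].Sublist l → ¬ (c < a ∧ a < b)

/-- Cutting an up-down word in two pieces leaves, after deleting the letter adjacent to the cut in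
the piece of even length, an up-down word in each piece, unless one piece is empty. -/
theorem UD_split : ∀ (s₁ s₂ : List ℕ), UD (s₁ ++ s₂) →
    (s₁ = [] ∧ UD s₂) ∨ (s₂ = [] ∧ UD s₁) ∨
      ∃ u v, u <+: s₁ ∧ v.Sublist s₂ ∧ UD u ∧ UD v ∧
        s₁.length + s₂.length = u.length + v.length + 1
  | [], s₂, h => Or.inl ⟨rfl, h⟩
  | [a], [], h => Or.inr (Or.inl ⟨rfl, h⟩)
  | [a], [b], h => by simp [UD] at h
  | [a], b :: c :: t, h => by
    refine Or.inr (Or.inr ⟨[a], c :: t, List.prefix_rfl, List.sublist_cons_self _ _, trivial, h.2.2, ?_⟩)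
    simp; omega
  | [a, b], [], h => by simp [UD] at h
  | [a, b], c :: t, h => by
    refine Or.inr (Or.inr ⟨[a], c :: t, by simp, List.Sublist.refl _, trivial, h.2.2, ?_⟩)
    simp; omega
  | a :: b :: c :: t, s₂, h => by
    obtain ⟨h1, h2, h3⟩ := h
    rcases UD_split (c :: t) s₂ h3 with ⟨h, -⟩ | ⟨rfl, h⟩ | ⟨u, v, hu, hv, hu', hv', hl⟩
    · simp at h
    · exact Or.inr (Or.inl ⟨rfl, h1, h2, h⟩)
    · cases u with
      | nil => exact absurd hu' (by simp [UD])
      | cons d u =>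
        obtain ⟨rfl, hu⟩ := List.cons_prefix_cons.1 hu
        refine Or.inr (Or.inr ⟨a :: b :: d :: u, v, by simpa using hu, hv, ⟨h1, h2, hu'⟩, hv', ?_⟩)
        simp at hl ⊢; omega

/-- In an up-down word of length at least `3`, the largest letter is a peak, so removing it leaves
two up-down words. -/
theorem UD_split_max (m : ℕ) (s₂ : List ℕ) (h2 : ∀ a ∈ s₂, a < m) :
    ∀ (s₁ : List ℕ), (∀ a ∈ s₁, a < m) → UD (s₁ ++ m :: s₂) →
    (s₁ = [] ∧ s₂ = []) ∨ (UD s₁ ∧ UD s₂)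
  | [], h1, h => by
    match s₂, h2, h with
    | [], _, _ => exact Or.inl ⟨rfl, rfl⟩
    | [a], _, h => simp [UD] at h
    | a :: b :: t, h2, h =>
      have := h2 a (by simp)
      have := h.1
      omega
  | [a], h1, h => by
    match s₂, h with
    | [], h => simp [UD] at h
    | b :: t, h => exact Or.inr ⟨trivial, h.2.2⟩
  | [a, b], h1, h => by
    have := h1 b (by simp)
    have := h.2.1
    omega
  | a :: b :: c :: t, h1, h => by
    obtain ⟨g1, g2, g3⟩ := h
    rcases UD_split_max m s₂ h2 (c :: t) (fun x hx => h1 x (by simp at hx ⊢; tauto)) g3 with ⟨h, -⟩ | ⟨h, h'⟩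
    · simp at h
    · exact Or.inr ⟨⟨g1, g2, h⟩, h'⟩

theorem UD_join (m : ℕ) (s₂ : List ℕ) (h2 : ∀ a ∈ s₂, a < m) (h : UD s₂) :
    ∀ (s₁ : List ℕ), (∀ a ∈ s₁, a < m) → UD s₁ → UD (s₁ ++ m :: s₂)
  | [], _, h' => by simp [UD] at h'
  | [a], h1, h' => by
    match s₂, h2, h with
    | [], _, h => simp [UD] at h
    | b :: t, h2, h => exact ⟨h1 a (by simp), h2 b (by simp), h⟩
  | [a, b], _, h' => by simp [UD] at h'
  | a :: b :: c :: t, h1, h' =>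
    ⟨h'.1, h'.2.1, UD_join m s₂ h2 h (c :: t) (fun x hx => h1 x (by simp at hx ⊢; tauto)) h'.2.2⟩

/-- Description by indices: `UD` says that the length is odd and that every odd position is a peak. -/
theorem UD_iff : ∀ s : List ℕ, UD s ↔ Odd s.length ∧
    ∀ j (h : 2 * j + 2 < s.length), s[2 * j] < s[2 * j + 1] ∧ s[2 * j + 2] < s[2 * j + 1]
  | [] => by simp [UD]
  | [a] => by simp [UD]
  | [a, b] => by simp [UD, Nat.odd_iff]
  | a :: b :: c :: t => by
    rw [UD, UD_iff (c :: t)]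
    constructor
    · rintro ⟨h1, h2, h3, h4⟩
      refine ⟨by simp [Nat.odd_iff] at h3 ⊢; omega, ?_⟩
      rintro (_ | j) h
      · exact ⟨h1, h2⟩
      · exact h4 j (by simp at h ⊢; omega)
    · rintro ⟨h3, h4⟩
      refine ⟨(h4 0 (by simp)).1, (h4 0 (by simp)).2, by simp [Nat.odd_iff] at h3 ⊢; omega, ?_⟩
      intro j h
      exact h4 (j + 1) (by simp at h ⊢; omega)

/-! ### The longest up-down subword -/

open scoped Classical in
/-- The length of the longest up-down subword of `l`, and `0` for the empty word. -/
noncomputable def udLen (l : List ℕ) : ℕ := (l.sublists.toFinset.filter UD).sup List.length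

theorem le_udLen {s l : List ℕ} (h : s.Sublist l) (hs : UD s) : s.length ≤ udLen l :=
  Finset.le_sup (f := List.length) (by simp [h, hs])

theorem udLen_le {l : List ℕ} {n : ℕ} (h : ∀ s, s.Sublist l → UD s → s.length ≤ n) :
    udLen l ≤ n := by
  apply Finset.sup_le
  simpa using h

theorem exists_udLen {l : List ℕ} (h : l ≠ []) :
    ∃ s, s.Sublist l ∧ UD s ∧ s.length = udLen l := by
  classical
  have : (l.sublists.toFinset.filter UD).Nonempty := by
    obtain ⟨a, t, rfl⟩ := List.exists_cons_of_ne_nil h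
    exact ⟨[a], by simp [UD]⟩
  obtain ⟨s, hs, h⟩ := Finset.exists_mem_eq_sup _ this List.length
  simp at hs
  exact ⟨s, hs.1, hs.2, h.symm⟩

@[simp] theorem udLen_nil : udLen [] = 0 :=
  Nat.le_zero.1 (udLen_le fun s hs _ => by simp [List.sublist_nil.1 hs])

theorem udLen_pos {l : List ℕ} (h : l ≠ []) : 1 ≤ udLen l := by
  obtain ⟨a, t, rfl⟩ := List.exists_cons_of_ne_nil h
  exact le_udLen (s := [a]) (by simp) trivial

theorem udLen_mono {l l' : List ℕ} (h : l.Sublist l') : udLen l ≤ udLen l' :=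
  udLen_le fun _ hs hu => le_udLen (hs.trans h) hu

/-- Additivity of `udLen` over the splitting of a word at its maximum `m`. -/
theorem udLen_append {L R : List ℕ} {m : ℕ} (hL : ∀ a ∈ L, a < m) (hR : ∀ a ∈ R, a < m) :
    udLen (L ++ m :: R) = udLen L + udLen R + if (L = [] ↔ R = []) then 1 else 0 := by
  apply le_antisymm
  -- `key` bounds the subwords that do not use `m`.
  · refine udLen_le fun s hs hu => ?_
    obtain ⟨s₁, s₂, rfl, h1, h2⟩ := List.sublist_append_iff.1 hs
    have key : ∀ t, t.Sublist R → UD (s₁ ++ t) → s₁.length + t.length ≤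
        udLen L + udLen R + if (L = [] ↔ R = []) then 1 else 0 := by
      intro t ht hu
      rcases UD_split _ _ hu with ⟨rfl, h⟩ | ⟨rfl, h⟩ | ⟨u, v, hu, hv, hu', hv', hl⟩
      · have := le_udLen ht h
        simp; omega
      · have := le_udLen h1 h
        simp; omega
      · have e1 := le_udLen (hu.sublist.trans h1) hu'
        have e2 := le_udLen (hv.trans ht) hv'
        have n1 : L ≠ [] := by
          rintro rfl
          have := List.sublist_nil.1 (hu.sublist.trans h1)
          simp [this, UD] at hu'
        have n2 : R ≠ [] := by
          rintro rfl
          have := List.sublist_nil.1 (hv.trans ht)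
          simp [this, UD] at hv'
        simp only [n1, n2, if_true]; omega
    rw [List.length_append]
    rcases List.sublist_cons_iff.1 h2 with g | ⟨r, rfl, g⟩
    · exact key _ g hu
    · rcases UD_split_max m r (fun a ha => hR a (g.subset ha)) s₁
        (fun a ha => hL a (h1.subset ha)) hu with ⟨rfl, rfl⟩ | ⟨g1, g2⟩
      · by_cases hl : L = []
        · by_cases hr : R = []
          · simp [hl, hr]
          · have := udLen_pos hr
            simp; omega
        · have := udLen_pos hl
          simp; omega
      · have e1 := le_udLen h1 g1
        have e2 := le_udLen g g2
        have n1 : L ≠ [] := by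
          rintro rfl
          simp [List.sublist_nil.1 h1, UD] at g1
        have n2 : R ≠ [] := by
          rintro rfl
          simp [List.sublist_nil.1 g, UD] at g2
        simp only [n1, n2, if_true, List.length_cons]; omega
  · by_cases hl : L = []
    · by_cases hr : R = []
      · subst hl hr
        simpa using udLen_pos (l := [m]) (by simp)
      · have := udLen_mono (show R.Sublist (L ++ m :: R) by simp)
        simp [hl, hr] at this ⊢; omega
    · by_cases hr : R = []
      · have := udLen_mono (show L.Sublist (L ++ m :: R) by simp)
        simp [hl, hr] at this ⊢; omega
      · obtain ⟨s₁, h1, u1, e1⟩ := exists_udLen hl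
        obtain ⟨s₂, h2, u2, e2⟩ := exists_udLen hr
        have := le_udLen (h1.append (h2.cons_cons m)) (UD_join m s₂
          (fun a ha => hR a (h2.subset ha)) u2 s₁ (fun a ha => hL a (h1.subset ha)) u1)
        simp only [List.length_append, List.length_cons] at this
        simp only [hl, hr, if_true]; omega

/-! ### Decomposition of 231-avoiding words at the maximum -/

theorem Av_append {L R : List ℕ} {m : ℕ} (hL : ∀ a ∈ L, a < m) (hR : ∀ a ∈ R, a < m) :
    Av (L ++ m :: R) ↔ Av L ∧ Av R ∧ ∀ a ∈ L, ∀ b ∈ R, a ≤ b := by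
  constructor
  · intro h
    refine ⟨fun a b c hs => h a b c (hs.trans (by simp)), fun a b c hs => h a b c (hs.trans (by simp)), ?_⟩
    intro a ha b hb
    have := h a m b (List.Sublist.append (l₁ := [a]) (r₁ := [m, b]) (by simpa) (by simpa))
    have := hL a ha
    omega
  · rintro ⟨h1, h2, h3⟩ a b c hs ⟨hca, hab⟩
    obtain ⟨s₁, s₂, e, g1, g2⟩ := List.sublist_append_iff.1 hs
    match s₁, e, g1 with
    | [], e, g1 =>
      subst e
      rcases List.sublist_cons_iff.1 g2 with g2 | ⟨r, e, g2⟩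
      · exact h2 _ _ _ g2 ⟨hca, hab⟩
      · simp at e
        obtain ⟨rfl, rfl⟩ := e
        have := hR b (g2.subset (by simp))
        omega
    | [a'], e, g1 =>
      simp at e
      obtain ⟨rfl, rfl⟩ := e
      rcases List.sublist_cons_iff.1 g2 with g2 | ⟨r, e, g2⟩
      · have := h3 a (g1.subset (by simp)) c (g2.subset (by simp))
        omega
      · simp at e
        obtain ⟨rfl, rfl⟩ := e
        have := h3 a (g1.subset (by simp)) c (g2.subset (by simp))
        omega
    | [a', b'], e, g1 =>
      simp at e
      obtain ⟨rfl, rfl, rfl⟩ := e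
      have e1 := hL a (g1.subset (by simp))
      rcases List.sublist_cons_iff.1 g2 with g2 | ⟨r, e, g2⟩
      · have := h3 a (g1.subset (by simp)) c (g2.subset (by simp))
        omega
      · simp at e
        omega
    | [a', b', c'], e, g1 =>
      simp at e
      obtain ⟨rfl, rfl, rfl, rfl⟩ := e
      exact h1 _ _ _ g1 ⟨hca, hab⟩
    | a' :: b' :: c' :: d' :: t, e, g1 => simp at e

/-- If `L ++ R` rearranges an interval and `L` lies below `R`, then `L` and `R` rearrange the
two consecutive subintervals: sort both and compare with the sorted interval. -/
theorem perm_split {L R : List ℕ} {k n : ℕ} (h : (L ++ R).Perm (List.range' k n))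
    (hlt : ∀ a ∈ L, ∀ b ∈ R, a ≤ b) :
    L.Perm (List.range' k L.length) ∧ R.Perm (List.range' (k + L.length) R.length) := by
  have pL := List.perm_insertionSort (· ≤ ·) L
  have pR := List.perm_insertionSort (· ≤ ·) R
  have hn : n = L.length + R.length := by simpa using h.length_eq.symm
  have e : L.insertionSort (· ≤ ·) ++ R.insertionSort (· ≤ ·) = List.range' k n := by
    refine List.Perm.eq_of_pairwise (le := (· ≤ ·)) (fun a b _ _ h h' => le_antisymm h h') ?_ ?_
      ((pL.append pR).trans h)
    · refine List.pairwise_append.2 ⟨List.pairwise_insertionSort _ _, List.pairwise_insertionSort _ _, ?_⟩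
      intro a ha b hb
      exact hlt a (pL.subset ha) b (pR.subset hb)
    · exact List.Pairwise.imp (fun h => le_of_lt h) List.pairwise_lt_range'
  rw [hn, ← List.range'_append_1] at e
  obtain ⟨e1, e2⟩ := List.append_inj e (by simp)
  exact ⟨e1 ▸ pL.symm, e2 ▸ pR.symm⟩

open scoped Classical in
/-- The 231-avoiding arrangements of the letters `k, k + 1, …, k + n - 1`, in one-line notation. -/
noncomputable def avPerms (k n : ℕ) : Finset (List ℕ) :=
  (List.range' k n).permutations.toFinset.filter Av

theorem mem_avPerms {k n : ℕ} {l : List ℕ} :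
    l ∈ avPerms k n ↔ l.Perm (List.range' k n) ∧ Av l := by
  simp [avPerms]

theorem mem_of_mem_avPerms {k n a : ℕ} {l : List ℕ} (h : l ∈ avPerms k n) (ha : a ∈ l) :
    k ≤ a ∧ a < k + n := by
  have := (mem_avPerms.1 h).1.subset ha
  simpa using this

theorem length_of_mem_avPerms {k n : ℕ} {l : List ℕ} (h : l ∈ avPerms k n) : l.length = n := by
  simpa using (mem_avPerms.1 h).1.length_eq

theorem join_mem {k i j : ℕ} {L R : List ℕ} (hL : L ∈ avPerms k i) (hR : R ∈ avPerms (k + i) j) :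
    L ++ (k + (i + j)) :: R ∈ avPerms k (i + j + 1) := by
  refine mem_avPerms.2 ⟨?_, (Av_append ?_ ?_).2 ⟨(mem_avPerms.1 hL).2, (mem_avPerms.1 hR).2, ?_⟩⟩
  · rw [List.range'_1_concat, ← List.range'_append_1]
    refine List.perm_middle.trans (((((mem_avPerms.1 hL).1.append
      (mem_avPerms.1 hR).1).cons _)).trans ?_)
    exact (List.perm_append_singleton _ _).symm
  · intro a ha
    have := mem_of_mem_avPerms hL ha
    omega
  · intro a ha
    have := mem_of_mem_avPerms hR ha
    omega
  · intro a ha b hb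
    have := mem_of_mem_avPerms hL ha
    have := mem_of_mem_avPerms hR hb
    omega

theorem exists_of_mem {k n : ℕ} {l : List ℕ} (hl : l ∈ avPerms k (n + 1)) :
    ∃ L R, l = L ++ (k + n) :: R ∧ L.length + R.length = n ∧
      L ∈ avPerms k L.length ∧ R ∈ avPerms (k + L.length) R.length := by
  obtain ⟨hp, hav⟩ := mem_avPerms.1 hl
  obtain ⟨L, R, rfl⟩ := List.append_of_mem (hp.symm.subset (show k + n ∈ _ by simp))
  have hp' : (L ++ R).Perm (List.range' k n) := by
    rw [List.range'_1_concat] at hp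
    exact (List.perm_middle.symm.trans (hp.trans (List.perm_append_singleton _ _))).cons_inv
  have hlt : ∀ a ∈ L ++ R, a < k + n := fun a ha => by
    have := hp'.subset ha
    simp at this
    exact this.2
  have h := (Av_append (fun a ha => hlt a (by simp [ha])) (fun a ha => hlt a (by simp [ha]))).1 hav
  have := perm_split hp' h.2.2
  exact ⟨L, R, rfl, by simpa using hp'.length_eq, mem_avPerms.2 ⟨this.1, h.1⟩,
    mem_avPerms.2 ⟨this.2, h.2.1⟩⟩

/-! ### The recurrence for the weighted counts -/

/-- The weighted count of the 231-avoiding arrangements of `k, …, k + n - 1`, with weight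
`x ^ udLen`. -/
noncomputable def wt (x : ℝ) (k n : ℕ) : ℝ := ∑ l ∈ avPerms k n, x ^ udLen l

theorem wt_zero (x : ℝ) (k : ℕ) : wt x k 0 = 1 := by
  have : avPerms k 0 = {[]} := by
    ext l
    simp only [mem_avPerms, List.range'_zero, List.perm_nil, Finset.mem_singleton]
    refine ⟨fun h => h.1, ?_⟩
    rintro rfl
    exact ⟨rfl, fun a b c h => by simp at h⟩
  simp [wt, this]

theorem wt_succ' (x : ℝ) (k n : ℕ) : wt x k (n + 1) = ∑ p ∈ Finset.HasAntidiagonal.antidiagonal n,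
    wt x k p.1 * wt x (k + p.1) p.2 * (if (p.1 = 0 ↔ p.2 = 0) then x else 1) := by
  have h1 : ∀ p ∈ Finset.HasAntidiagonal.antidiagonal n,
      wt x k p.1 * wt x (k + p.1) p.2 * (if (p.1 = 0 ↔ p.2 = 0) then x else 1) =
      ∑ q ∈ avPerms k p.1 ×ˢ avPerms (k + p.1) p.2, x ^ udLen (q.1 ++ (k + n) :: q.2) := by
    rintro ⟨i, j⟩ hp
    simp only [Finset.HasAntidiagonal.mem_antidiagonal] at hp
    rw [wt, wt, Finset.sum_mul_sum, Finset.sum_product, Finset.sum_mul]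
    refine Finset.sum_congr rfl fun L hL => ?_
    rw [Finset.sum_mul]
    refine Finset.sum_congr rfl fun R hR => ?_
    dsimp only at hL hR ⊢
    rw [udLen_append]
    · have e1 : L = [] ↔ i = 0 := by
        rw [← List.length_eq_zero_iff, length_of_mem_avPerms hL]
      have e2 : R = [] ↔ j = 0 := by
        rw [← List.length_eq_zero_iff, length_of_mem_avPerms hR]
      simp only [e1, e2]
      split_ifs <;> ring
    · intro a ha
      have := mem_of_mem_avPerms hL ha
      omega
    · intro a ha
      have := mem_of_mem_avPerms hR ha
      omega
  rw [Finset.sum_congr rfl h1, Finset.sum_sigma', wt]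
  symm
  refine Finset.sum_bij (fun q _ => q.2.1 ++ (k + n) :: q.2.2) ?_ ?_ ?_ ?_
  · rintro ⟨⟨i, j⟩, L, R⟩ h
    simp only [Finset.mem_sigma, Finset.HasAntidiagonal.mem_antidiagonal, Finset.mem_product] at h
    obtain ⟨rfl, hL, hR⟩ := h
    exact join_mem hL hR
  · rintro ⟨⟨i, j⟩, L, R⟩ h ⟨⟨i', j'⟩, L', R'⟩ h' e
    simp only [Finset.mem_sigma, Finset.HasAntidiagonal.mem_antidiagonal, Finset.mem_product] at h h'
    obtain ⟨rfl, hL, hR⟩ := h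
    obtain ⟨hn, hL', hR'⟩ := h'
    dsimp only at e
    have n1 : ∀ {a}, a ∈ L → a ≠ k + (i + j) := fun ha => by
      have := mem_of_mem_avPerms hL ha
      omega
    have n2 : ∀ {a}, a ∈ L' → a ≠ k + (i + j) := fun ha => by
      have := mem_of_mem_avPerms hL' ha
      omega
    have : L = L' ∧ R = R' := by
      rcases List.append_eq_append_iff.1 e with ⟨as, e1, e2⟩ | ⟨as, e1, e2⟩
      · cases as with
        | nil => simp_all
        | cons a as =>
          simp at e2
          exact absurd e2.1.symm (n2 (by simp [e1]))
      · cases as with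
        | nil => simp_all
        | cons a as =>
          simp at e2
          exact absurd e2.1.symm (n1 (by simp [e1]))
    obtain ⟨rfl, rfl⟩ := this
    obtain rfl := (length_of_mem_avPerms hL).symm.trans (length_of_mem_avPerms hL')
    obtain rfl := (length_of_mem_avPerms hR).symm.trans (length_of_mem_avPerms hR')
    rfl
  · intro l hl
    obtain ⟨L, R, rfl, hn, hL, hR⟩ := exists_of_mem hl
    exact ⟨⟨(L.length, R.length), L, R⟩, by simp [hn, hL, hR], rfl⟩
  · rintro ⟨⟨i, j⟩, L, R⟩ h
    rfl

/-- The weighted count depends only on the number of letters. -/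
theorem wt_shift (x : ℝ) (n : ℕ) : ∀ k, wt x k n = wt x 0 n := by
  induction n using Nat.strong_induction_on with
  | _ n ih =>
    intro k
    cases n with
    | zero => rw [wt_zero, wt_zero]
    | succ n =>
      rw [wt_succ', wt_succ']
      refine Finset.sum_congr rfl fun p hp => ?_
      have := Finset.HasAntidiagonal.mem_antidiagonal.1 hp
      rw [ih p.1 (by omega), ih p.2 (by omega), ih p.2 (by omega) (0 + p.1)]

theorem wt_nonneg {x : ℝ} (hx : 0 ≤ x) (k n : ℕ) : 0 ≤ wt x k n :=
  Finset.sum_nonneg fun _ _ => pow_nonneg hx _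

/-- The coefficients of `H = G - 1`, i.e. the weighted counts with the constant term removed. -/
noncomputable def coef (x : ℝ) (n : ℕ) : ℝ := if n = 0 then 0 else wt x 0 n

theorem coef_nonneg {x : ℝ} (hx : 0 ≤ x) (n : ℕ) : 0 ≤ coef x n := by
  rw [coef]; split_ifs
  exacts [le_rfl, wt_nonneg hx _ _]

/-- The functional equation `H = t (x + 2 H + x H²)`, read off coefficientwise. -/
theorem coef_succ (x : ℝ) (n : ℕ) : coef x (n + 1) = (if n = 0 then x else 0) + 2 * coef x n +
    x * ∑ p ∈ Finset.HasAntidiagonal.antidiagonal n, coef x p.1 * coef x p.2 := by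
  have h0 : coef x (n + 1) = wt x 0 (n + 1) := by simp [coef]
  have h1 : ∀ p ∈ Finset.HasAntidiagonal.antidiagonal n,
      wt x 0 p.1 * wt x (0 + p.1) p.2 * (if (p.1 = 0 ↔ p.2 = 0) then x else 1) =
      ((if p.1 = 0 then (if p.2 = 0 then x else 0) else 0) + (if p.1 = 0 then coef x p.2 else 0)
        + (if p.2 = 0 then coef x p.1 else 0)) + x * (coef x p.1 * coef x p.2) := by
    rintro ⟨i, j⟩ -
    dsimp only
    rw [wt_shift x j]
    by_cases hi : i = 0 <;> by_cases hj : j = 0 <;> simp [coef, hi, hj, wt_zero]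
    ring
  have hA : ∀ f : ℕ → ℝ, ∑ p ∈ Finset.HasAntidiagonal.antidiagonal n, (if p.1 = 0 then f p.2 else 0) = f n := by
    intro f
    rw [Finset.sum_eq_single (0, n)]
    · simp
    · rintro ⟨i, j⟩ hp hne
      simp only [Finset.HasAntidiagonal.mem_antidiagonal] at hp
      by_cases hi : i = 0
      · simp_all
      · simp [hi]
    · simp
  have hB : ∑ p ∈ Finset.HasAntidiagonal.antidiagonal n, (if p.2 = 0 then coef x p.1 else 0) = coef x n := by
    rw [← hA (coef x), ← Finset.Nat.sum_antidiagonal_swap]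
    rfl
  rw [h0, wt_succ', Finset.sum_congr rfl h1, Finset.sum_add_distrib, Finset.sum_add_distrib,
    Finset.sum_add_distrib, hA (fun j => if j = 0 then x else 0), hA, hB, Finset.mul_sum]
  ring

theorem coef_zero (x : ℝ) : coef x 0 = 0 := by simp [coef]

/-! ### Convergence and divergence -/

theorem coef_succ_mul_pow (x t : ℝ) (n : ℕ) : coef x (n + 1) * t ^ (n + 1) =
    t * ((if n = 0 then x else 0) + 2 * (coef x n * t ^ n) +
      x * ∑ p ∈ Finset.HasAntidiagonal.antidiagonal n,
        (coef x p.1 * t ^ p.1) * (coef x p.2 * t ^ p.2)) := by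
  have e : ∑ p ∈ Finset.HasAntidiagonal.antidiagonal n,
      (coef x p.1 * t ^ p.1) * (coef x p.2 * t ^ p.2) =
      (∑ p ∈ Finset.HasAntidiagonal.antidiagonal n, coef x p.1 * coef x p.2) * t ^ n := by
    rw [Finset.sum_mul]
    refine Finset.sum_congr rfl fun p hp => ?_
    rw [← Finset.HasAntidiagonal.mem_antidiagonal.1 hp]
    ring
  rw [e, coef_succ]
  by_cases hn : n = 0
  · subst hn; simp; ring
  · simp [hn]; ring

/-- The map `S ↦ t (x + 2S + x S²)` preserves `[0, 1]`, and the partial sums are dominated by its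
iterates. -/
theorem partial_le {x t : ℝ} (hx : 0 < x) (ht : 0 ≤ t) (h : 2 * t * (x + 1) ≤ 1) (N : ℕ) :
    ∑ n ∈ Finset.range N, coef x n * t ^ n ≤ 1 := by
  induction N with
  | zero => simp
  | succ N ih =>
    set S := ∑ n ∈ Finset.range N, coef x n * t ^ n with hS
    have hS0 : 0 ≤ S := Finset.sum_nonneg fun n _ => mul_nonneg (coef_nonneg hx.le n) (pow_nonneg ht n)
    have hconv : ∑ n ∈ Finset.range N, ∑ p ∈ Finset.HasAntidiagonal.antidiagonal n,
        (coef x p.1 * t ^ p.1) * (coef x p.2 * t ^ p.2) ≤ S * S := by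
      rw [hS, Finset.sum_mul_sum, ← Finset.sum_product', Finset.sum_sigma']
      rw [← Finset.sum_image (f := fun p : ℕ × ℕ => (coef x p.1 * t ^ p.1) * (coef x p.2 * t ^ p.2))
        (g := fun q : (_ : ℕ) × ℕ × ℕ => q.2)]
      · refine Finset.sum_le_sum_of_subset_of_nonneg ?_ fun p _ _ => ?_
        · intro p hp
          simp only [Finset.mem_image, Finset.mem_sigma, Finset.mem_range,
            Finset.HasAntidiagonal.mem_antidiagonal] at hp
          obtain ⟨⟨n, q⟩, ⟨h1, h2⟩, rfl⟩ := hp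
          simp only [Finset.mem_product, Finset.mem_range]
          dsimp only at h1 h2 ⊢
          omega
        · exact mul_nonneg (mul_nonneg (coef_nonneg hx.le _) (pow_nonneg ht _))
            (mul_nonneg (coef_nonneg hx.le _) (pow_nonneg ht _))
      · rintro ⟨n, q⟩ h1 ⟨n', q'⟩ h2 e
        simp at h1 h2 e
        subst e
        obtain rfl := h1.2.symm.trans h2.2
        rfl
    have hrec : ∑ n ∈ Finset.range (N + 1), coef x n * t ^ n ≤ t * (x + 2 * S + x * (S * S)) := by
      rw [Finset.sum_range_succ']
      rw [Finset.sum_congr rfl fun n _ => coef_succ_mul_pow x t n, ← Finset.mul_sum, Finset.sum_add_distrib,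
        Finset.sum_add_distrib, ← Finset.mul_sum, ← Finset.mul_sum, ← hS, coef_zero]
      simp only [zero_mul, add_zero]
      refine mul_le_mul_of_nonneg_left ?_ ht
      gcongr
      rw [Finset.sum_ite_eq' (Finset.range N) 0 (fun _ => x)]
      split_ifs <;> linarith
    calc _ ≤ _ := hrec
      _ ≤ t * (x + 2 * 1 + x * (1 * 1)) := by gcongr
      _ ≤ 1 := by linarith

theorem coef_summable {x t : ℝ} (hx : 0 < x) (ht : 0 ≤ t) (h : 2 * t * (x + 1) ≤ 1) :
    Summable fun n => coef x n * t ^ n :=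
  summable_of_sum_range_le (fun n => mul_nonneg (coef_nonneg hx.le n) (pow_nonneg ht n))
    (partial_le hx ht h)

theorem coef_not_summable {x t : ℝ} (hx : 0 < x) (ht : 0 ≤ t) (h : 1 < 2 * t * (x + 1)) :
    ¬ Summable fun n => coef x n * t ^ n := by
  intro hs
  have hnn : ∀ n, 0 ≤ coef x n * t ^ n :=
    fun n => mul_nonneg (coef_nonneg hx.le n) (pow_nonneg ht n)
  have hsn : Summable fun n => ‖coef x n * t ^ n‖ := hs.norm
  set S := ∑' n, coef x n * t ^ n with hS
  have hS0 : 0 ≤ S := tsum_nonneg hnn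
  have hprod := tsum_mul_tsum_eq_tsum_sum_antidiagonal_of_summable_norm hsn hsn
  have hprods := (summable_norm_sum_mul_antidiagonal_of_summable_norm hsn hsn).of_norm
  have hsq := hprods.hasSum
  rw [← hprod, ← hS] at hsq
  have hx0 : HasSum (fun n : ℕ => if n = 0 then x else 0) x := hasSum_ite_eq 0 x
  have hR := ((hx0.add (hs.hasSum.mul_left 2)).add (hsq.mul_left x)).mul_left t
  have hL : HasSum (fun n => coef x (n + 1) * t ^ (n + 1)) S := by
    simpa [coef_zero] using (hasSum_nat_add_iff' (f := fun n => coef x n * t ^ n) 1).2 hs.hasSum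
  have : S = t * (x + 2 * S + x * (S * S)) := by
    simp only [coef_succ_mul_pow] at hL
    exact hL.unique hR
  have ht' : 0 < t := by
    rcases ht.eq_or_lt with rfl | h'
    · norm_num at h
    · exact h'
  have hSpos : 0 < S := by
    rw [this]; positivity
  -- Bound the fixed-point equation from below using `2 S ≤ S² + 1`.
  have h2 : t * x * (2 * S) ≤ t * x * (S * S + 1) := by
    refine mul_le_mul_of_nonneg_left ?_ (by positivity)
    nlinarith [sq_nonneg (S - 1)]
  nlinarith

/-! ### From permutations to words -/

theorem ofFn_sublist_ofFn {n k : ℕ} {g : Fin n → ℕ} {h : Fin k → ℕ} :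
    (List.ofFn h).Sublist (List.ofFn g) ↔ ∃ f : Fin k → Fin n, StrictMono f ∧ ∀ i, h i = g (f i) := by
  rw [List.sublist_iff_exists_fin_orderEmbedding_get_eq]
  constructor
  · rintro ⟨f, hf⟩
    refine ⟨fun i => Fin.cast (by simp) (f (Fin.cast (by simp) i)), ?_, fun i => ?_⟩
    · intro a b hab
      have := f.strictMono (show Fin.cast (by simp) a < Fin.cast (by simp) b from hab)
      exact this
    · have := hf (Fin.cast (by simp) i)
      simp only [List.get_ofFn] at this
      exact this
  · rintro ⟨f, hf, he⟩
    refine ⟨OrderEmbedding.ofStrictMono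
      (fun i => Fin.cast (by simp) (f (Fin.cast (by simp) i))) ?_, fun i => ?_⟩
    · intro a b hab
      exact hf (show Fin.cast _ a < Fin.cast _ b from hab)
    · simp only [he, List.get_ofFn]
      rfl

/-- The one-line notation of `σ`, as a word in the letters `0, …, n - 1`. -/
def permList {n : ℕ} (σ : Equiv.Perm (Fin n)) : List ℕ := List.ofFn fun i => (σ i : ℕ)

theorem permList_injective {n : ℕ} : Function.Injective (permList (n := n)) := by
  intro σ τ h
  ext i
  exact congrFun (List.ofFn_injective h) i

theorem permList_perm {n : ℕ} (σ : Equiv.Perm (Fin n)) :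
    (permList σ).Perm (List.range' 0 n) := by
  refine (List.perm_ext_iff_of_nodup ?_ List.nodup_range').2 fun a => ?_
  · exact List.nodup_ofFn.2 (Fin.val_injective.comp σ.injective)
  · simp only [permList, List.mem_ofFn, List.mem_range'_1, zero_le, true_and, zero_add]
    exact ⟨by rintro ⟨i, rfl⟩; exact (σ i).2, fun h => ⟨σ.symm ⟨a, h⟩, by simp⟩⟩

theorem exists_permList {n : ℕ} {l : List ℕ} (h : l.Perm (List.range' 0 n)) :
    ∃ σ : Equiv.Perm (Fin n), permList σ = l := by
  have hlen : l.length = n := by simpa using h.length_eq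
  have hnd : l.Nodup := h.nodup_iff.2 List.nodup_range'
  have hlt : ∀ a ∈ l, a < n := fun a ha => by simpa using h.subset ha
  subst hlen
  let g : Fin l.length → Fin l.length := fun i => ⟨l[i], hlt _ (List.getElem_mem _)⟩
  have hg : Function.Injective g := by
    intro i j hij
    simp only [g, Fin.mk.injEq] at hij
    exact Fin.ext ((hnd.getElem_inj_iff).1 hij)
  refine ⟨Equiv.ofBijective g (Finite.injective_iff_bijective.1 hg), ?_⟩
  simp [permList, g]

theorem Av_permList {n : ℕ} (σ : Equiv.Perm (Fin n)) : Av (permList σ) ↔ Avoids231 σ := by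
  have h3 : ∀ a b c : ℕ, [a, b, c].Sublist (permList σ) ↔
      ∃ i j k : Fin n, i < j ∧ j < k ∧ a = σ i ∧ b = σ j ∧ c = σ k := by
    intro a b c
    have : [a, b, c] = List.ofFn ![a, b, c] := by simp
    rw [this, permList, ofFn_sublist_ofFn]
    constructor
    · rintro ⟨f, hf, he⟩
      exact ⟨f 0, f 1, f 2, hf (by decide), hf (by decide), he 0, he 1, he 2⟩
    · rintro ⟨i, j, k, h1, h2, ha, hb, hc⟩
      refine ⟨![i, j, k], ?_, ?_⟩
      · rw [Fin.strictMono_iff_lt_succ]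
        intro q
        fin_cases q
        exacts [h1, h2]
      · intro q
        fin_cases q
        exacts [ha, hb, hc]
  constructor
  · rintro h ⟨i, j, k, h1, h2, h4, h5⟩
    exact h _ _ _ ((h3 _ _ _).2 ⟨i, j, k, h1, h2, rfl, rfl, rfl⟩) ⟨h4, h5⟩
  · rintro h a b c hs ⟨h4, h5⟩
    obtain ⟨i, j, k, h1, h2, rfl, rfl, rfl⟩ := (h3 _ _ _).1 hs
    exact h ⟨i, j, k, h1, h2, h4, h5⟩

theorem isAltPM_iff {n k : ℕ} (σ : Equiv.Perm (Fin n)) (f : Fin k → Fin n) (hf : StrictMono f)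
    (hk : 3 ≤ k) : IsAltPM σ f ↔ UD (List.ofFn fun j => (σ (f j) : ℕ)) := by
  rw [UD_iff]
  simp only [List.length_ofFn, List.getElem_ofFn, Fin.val_fin_lt]
  constructor
  · rintro ⟨⟨-, halt⟩, -, hodd, h0, -⟩
    refine ⟨hodd, ?_⟩
    have hne : ∀ j (h : j + 1 < k), ¬ σ (f ⟨j, by omega⟩) < σ (f ⟨j + 1, h⟩) →
        σ (f ⟨j + 1, h⟩) < σ (f ⟨j, by omega⟩) := by
      intro j h hlt
      refine lt_of_le_of_ne (not_lt.1 hlt) fun e => ?_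
      have := hf.injective (σ.injective e)
      simp at this
    have hup : ∀ j (h : 2 * j + 1 < k), σ (f ⟨2 * j, by omega⟩) < σ (f ⟨2 * j + 1, h⟩) := by
      intro j
      induction j with
      | zero => exact fun _ => h0 hk
      | succ j ih =>
        intro h
        have h1 := (halt (2 * j) (by omega)).1 (ih (by omega))
        exact not_not.1 (mt (halt (2 * j + 1) (by omega)).2 h1)
    intro j h
    exact ⟨hup j (by omega), hne (2 * j + 1) h ((halt (2 * j) h).1 (hup j (by omega)))⟩
  · rintro ⟨hodd, h⟩
    refine ⟨⟨hf, ?_⟩, hk, hodd, fun _ => (h 0 (by omega)).1, fun _ => ?_⟩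
    · intro j hj
      obtain ⟨m, rfl | rfl⟩ := j.even_or_odd'
      · exact iff_of_true (h m hj).1 (not_lt.2 (h m hj).2.le)
      · have h1 := (h m (by omega)).2
        have h2 := (h (m + 1) (by obtain ⟨q, rfl⟩ := hodd; omega)).1
        exact iff_of_false (not_lt.2 h1.le) (not_not.2 h2)
    · obtain ⟨q, rfl⟩ := hodd
      obtain ⟨q, rfl⟩ : ∃ r, q = r + 1 := ⟨q - 1, by omega⟩
      exact (h q (by omega)).2

theorem apm_eq {n : ℕ} (σ : Equiv.Perm (Fin n)) : apm σ = udLen (permList σ) := by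
  rw [apm]
  split_ifs with hn
  · subst hn
    simp [permList]
  have hne : permList σ ≠ [] := by simpa [permList] using hn
  have hbdd : BddAbove {k | ∃ f : Fin k → Fin n, IsAltPM σ f} := by
    refine ⟨n, ?_⟩
    rintro k ⟨f, hf⟩
    simpa using Fintype.card_le_of_injective f hf.1.1.injective
  apply le_antisymm
  · refine max_le ?_ (udLen_pos hne)
    refine csSup_le' ?_
    rintro k ⟨f, hf⟩
    have := le_udLen (ofFn_sublist_ofFn (g := fun i => (σ i : ℕ)) (h := fun j => (σ (f j) : ℕ)).2
      ⟨f, hf.1.1, fun _ => rfl⟩)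
      ((isAltPM_iff σ f hf.1.1 hf.2.1).1 hf)
    rwa [List.length_ofFn] at this
  · refine udLen_le fun s hs hu => ?_
    by_cases h3 : 3 ≤ s.length
    · refine le_max_of_le_left (le_csSup hbdd ?_)
      rw [← List.ofFn_get s] at hs hu
      obtain ⟨f, hf, he⟩ := ofFn_sublist_ofFn.1 hs
      refine ⟨f, (isAltPM_iff σ f hf h3).2 ?_⟩
      rwa [funext he] at hu
    · have := ((UD_iff s).1 hu).1
      obtain ⟨q, hq⟩ := this
      exact le_max_of_le_right (by omega)

theorem catalan_mul_Mapm (n : ℕ) (lam : ℝ) :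
    (catalan n : ℝ) * Mapm n lam = wt (Real.exp lam) 0 n := by
  have hc : (catalan n : ℝ) ≠ 0 := by
    have := succ_mul_catalan_eq_centralBinom n
    have := n.centralBinom_pos
    refine Nat.cast_ne_zero.2 fun h => ?_
    simp_all
  rw [Mapm, mul_div_cancel₀ _ hc, wt]
  refine Finset.sum_bij (fun σ _ => permList σ) ?_ ?_ ?_ ?_
  · intro σ hσ
    exact mem_avPerms.2 ⟨permList_perm σ, (Av_permList σ).2 (by simpa using hσ)⟩
  · intro σ _ τ _ h
    exact permList_injective h
  · intro l hl
    obtain ⟨σ, rfl⟩ := exists_permList (mem_avPerms.1 hl).1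
    exact ⟨σ, by simpa using (Av_permList σ).1 (mem_avPerms.1 hl).2, rfl⟩
  · intro σ _
    rw [apm_eq, mul_comm, Real.exp_nat_mul]

/-- The radius of convergence of `Σₙ Cₙ Mₙ(λ) tⁿ` equals `1/(2(e^λ + 1))`: the series converges
for `|t|` below this value and diverges for `|t|` above it. -/
theorem apm_series_radius (lam : ℝ) :
    (∀ t : ℝ, |t| < 1 / (2 * (Real.exp lam + 1)) →
      Summable (fun n : ℕ => (catalan n : ℝ) * Mapm n lam * t ^ n)) ∧
    (∀ t : ℝ, 1 / (2 * (Real.exp lam + 1)) < |t| →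
      ¬ Summable (fun n : ℕ => (catalan n : ℝ) * Mapm n lam * t ^ n)) := by
  have hx := Real.exp_pos lam
  have key : ∀ t : ℝ, Summable (fun n : ℕ => (catalan n : ℝ) * Mapm n lam * t ^ n) ↔
      Summable fun n => coef (Real.exp lam) n * |t| ^ n := by
    intro t
    rw [← summable_abs_iff, ← summable_nat_add_iff 1,
      ← summable_nat_add_iff (f := fun n => coef (Real.exp lam) n * |t| ^ n) 1]
    refine summable_congr fun n => ?_
    rw [catalan_mul_Mapm, abs_mul, abs_pow, abs_of_nonneg (wt_nonneg hx.le _ _)]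
    simp [coef]
  refine ⟨fun t ht => ?_, fun t ht => ?_⟩
  · rw [lt_div_iff₀ (by positivity)] at ht
    exact (key t).2 (coef_summable hx (abs_nonneg t) (by linarith))
  · rw [div_lt_iff₀ (by positivity)] at ht
    exact fun h => coef_not_summable hx (abs_nonneg t) (by linarith) ((key t).1 h)
end

section
/- For every real λ, limₙ (1/n)·log E[e^{λ Aₙ}] = log(e^λ + 1) − log 2, where the expectation is under the uniform measure on 231-avoiding permutations of [n] and Aₙ is the longest alternating subsequence length. -/
/-!
The longest alternating subsequence of a permutation has length twice its number of peaks up to an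
error of at most `3` (`le_altLen`, `altLen_le`), so `E[e^{λ A}]` may be replaced by the peak
generating polynomial at `y = e^{2λ}`, divided by the Catalan number, without changing the
exponential growth rate.

A 231-avoiding permutation has the form `L m R'` with maximum `m` and all letters of `L` below all
letters of `R'`, where `L` and `R'` are arbitrary 231-avoiding words (`join_avoids`, `exists_join`).
Peaks are additive under this decomposition, with one new peak when `L` and `R'` are both nonempty
(`peaks_join`). Hence the generating function `G` of the peak polynomials, shifted by one, satisfies
`G = 1 + 2 t G + y t² G²` (`isMotz_peakGF`), the equation of weighted Motzkin paths; at `y = 1` it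
gives the shifted Catalan numbers (`isMotz_catalan`).

For `y = x²` the coefficients of `G` grow like `(2 + 2 x)ⁿ` (`IsMotz.tendsto`). They are
supermultiplicative, so the growth rate exists. At `t = 1 / (2 + 2 x)` the quadratic has a double
root, which bounds the partial sums of the series by induction. For slightly larger `t` the
discriminant is negative, so the series diverges there. Taking `x = e^λ` in the numerator and
`x = 1` in the denominator yields `log (2 + 2 e^λ) - log 4`.
-/

open Equiv Filter Real Set

/-! ### Growth of weighted Motzkin numbers -/

/-- `Q` is the sequence of Motzkin-path weights with two-coloured level steps and weight `y` for
each up step: its generating function satisfies `G = 1 + 2 t G + y t² G²`. -/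
structure IsMotz (y : ℝ) (Q : ℕ → ℝ) : Prop where
  zero : Q 0 = 1
  one : Q 1 = 2
  step : ∀ n, Q (n + 2) =
    2 * Q (n + 1) + y * ∑ p ∈ Finset.HasAntidiagonal.antidiagonal n, Q p.1 * Q p.2

theorem IsMotz.pos {y : ℝ} (hy : 0 ≤ y) {Q : ℕ → ℝ} (h : IsMotz y Q) (n : ℕ) : 0 < Q n := by
  induction n using Nat.strong_induction_on with
  | _ n ih =>
    match n with
    | 0 => rw [h.zero]; norm_num
    | 1 => rw [h.one]; norm_num
    | n + 2 =>
      rw [h.step]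
      have h1 := ih (n + 1) (by omega)
      have h2 : 0 ≤ ∑ p ∈ Finset.HasAntidiagonal.antidiagonal n, Q p.1 * Q p.2 := by
        refine Finset.sum_nonneg fun p hp => ?_
        rw [Finset.HasAntidiagonal.mem_antidiagonal] at hp
        exact (mul_pos (ih _ (by omega)) (ih _ (by omega))).le
      have := mul_nonneg hy h2
      linarith

/-- Concatenating two Motzkin paths gives a Motzkin path. -/
theorem IsMotz.supermul {y : ℝ} (hy : 0 ≤ y) {Q : ℕ → ℝ} (h : IsMotz y Q) (m n : ℕ) :
    Q m * Q n ≤ Q (m + n) := by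
  induction m using Nat.strong_induction_on with
  | _ m ih =>
    match m with
    | 0 => simp [h.zero]
    | 1 =>
      rw [h.one]
      match n with
      | 0 => simp [h.zero, h.one]
      | n + 1 =>
        rw [show 1 + (n + 1) = n + 2 by ring, h.step]
        have h2 : 0 ≤ ∑ p ∈ Finset.HasAntidiagonal.antidiagonal n, Q p.1 * Q p.2 :=
          Finset.sum_nonneg fun p hp => (mul_pos (h.pos hy _) (h.pos hy _)).le
        have := mul_nonneg hy h2
        linarith
    | m + 2 =>
      rw [show m + 2 + n = (m + n) + 2 by ring, h.step, h.step]
      have h1 := ih (m + 1) (by omega)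
      have h2 : (∑ p ∈ Finset.HasAntidiagonal.antidiagonal m, Q p.1 * Q p.2) * Q n ≤
          ∑ p ∈ Finset.HasAntidiagonal.antidiagonal (m + n), Q p.1 * Q p.2 := by
        rw [Finset.sum_mul]
        calc ∑ p ∈ Finset.HasAntidiagonal.antidiagonal m, Q p.1 * Q p.2 * Q n
            ≤ ∑ p ∈ Finset.HasAntidiagonal.antidiagonal m, Q p.1 * Q (p.2 + n) := by
              refine Finset.sum_le_sum fun p hp => ?_
              rw [Finset.HasAntidiagonal.mem_antidiagonal] at hp
              rw [mul_assoc]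
              exact mul_le_mul_of_nonneg_left (ih _ (by omega)) (h.pos hy _).le
          _ = ∑ p ∈ (Finset.HasAntidiagonal.antidiagonal m).image (fun p : ℕ × ℕ => (p.1, p.2 + n)),
                Q p.1 * Q p.2 := by
              rw [Finset.sum_image]
              rintro ⟨a, b⟩ _ ⟨c, d⟩ _ hh
              simp only [Prod.mk.injEq] at hh ⊢
              omega
          _ ≤ _ := by
              refine Finset.sum_le_sum_of_subset_of_nonneg ?_
                fun p _ _ => (mul_pos (h.pos hy _) (h.pos hy _)).le
              intro p hp
              simp only [Finset.mem_image, Finset.HasAntidiagonal.mem_antidiagonal] at hp ⊢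
              obtain ⟨q, hq, rfl⟩ := hp
              simp only
              omega
      have h3 := mul_le_mul_of_nonneg_left h2 hy
      rw [show m + 1 + n = m + n + 1 by ring] at h1
      nlinarith

theorem sum_antidiagonal_le_sq (b : ℕ → ℝ) (hb : ∀ n, 0 ≤ b n) (N : ℕ) :
    ∑ n ∈ Finset.range N, ∑ p ∈ Finset.HasAntidiagonal.antidiagonal n, b p.1 * b p.2 ≤
      (∑ n ∈ Finset.range N, b n) ^ 2 := by
  rw [sq, Finset.sum_mul_sum, ← Finset.sum_product', Finset.sum_sigma']
  rw [← Finset.sum_image (s := (Finset.range N).sigma fun n => Finset.HasAntidiagonal.antidiagonal n)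
    (g := fun x => x.2) (f := fun p : ℕ × ℕ => b p.1 * b p.2)]
  · refine Finset.sum_le_sum_of_subset_of_nonneg ?_ fun p _ _ => mul_nonneg (hb _) (hb _)
    intro p hp
    simp only [Finset.mem_image, Finset.mem_sigma, Finset.mem_range,
      Finset.HasAntidiagonal.mem_antidiagonal] at hp
    obtain ⟨⟨n, q⟩, ⟨h1, h2⟩, rfl⟩ := hp
    simp only [Finset.mem_product, Finset.mem_range]
    simp only at h1 h2
    omega
  · rintro ⟨n, q⟩ h1 ⟨n', q'⟩ h2 hh
    simp only [Finset.coe_sigma, Set.mem_sigma_iff, Finset.mem_coe,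
      Finset.HasAntidiagonal.mem_antidiagonal] at h1 h2 hh
    obtain rfl := hh
    obtain rfl : n = n' := by omega
    rfl

/-- At `t = 1 / (2 + 2 x)` the quadratic equation for the generating function has the double root
`(2 + 2 x) / x`, which bounds all partial sums. -/
theorem IsMotz.le {x : ℝ} (hx : 0 < x) {Q : ℕ → ℝ} (h : IsMotz (x ^ 2) Q) (n : ℕ) :
    Q n ≤ (2 + 2 * x) / x * (2 + 2 * x) ^ n := by
  have hy : 0 ≤ x ^ 2 := by positivity
  set r := 2 + 2 * x with hr
  have hr0 : 0 < r := by positivity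
  set b : ℕ → ℝ := fun n => Q n / r ^ n with hbdef
  have hb : ∀ n, 0 ≤ b n := fun n => div_nonneg (h.pos hy n).le (by positivity)
  have b0 : b 0 = 1 := by simp [hbdef, h.zero]
  have b1 : b 1 = 2 / r := by simp [hbdef, h.one]
  have bstep : ∀ n, b (n + 2) = 2 / r * b (n + 1) +
      (x / r) ^ 2 * ∑ p ∈ Finset.HasAntidiagonal.antidiagonal n, b p.1 * b p.2 := by
    intro n
    have : ∑ p ∈ Finset.HasAntidiagonal.antidiagonal n, b p.1 * b p.2 =
        (∑ p ∈ Finset.HasAntidiagonal.antidiagonal n, Q p.1 * Q p.2) / r ^ n := by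
      rw [Finset.sum_div]
      refine Finset.sum_congr rfl fun p hp => ?_
      rw [Finset.HasAntidiagonal.mem_antidiagonal] at hp
      rw [← hp, pow_add]
      simp only [hbdef]
      field_simp
    rw [this]
    simp only [hbdef]
    rw [h.step]
    field_simp
    ring
  -- the recursion, summed over `n < N`
  have key : ∀ N, ∑ n ∈ Finset.range N, b (n + 2) =
      2 / r * ∑ n ∈ Finset.range N, b (n + 1) +
      (x / r) ^ 2 * ∑ n ∈ Finset.range N, ∑ p ∈ Finset.HasAntidiagonal.antidiagonal n, b p.1 * b p.2 := by
    intro N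
    rw [Finset.mul_sum, Finset.mul_sum, ← Finset.sum_add_distrib]
    exact Finset.sum_congr rfl fun n _ => bstep n
  have S : ∀ N, ∑ n ∈ Finset.range N, b n ≤ r / x := by
    intro N
    induction N with
    | zero => simp only [Finset.range_zero, Finset.sum_empty]; positivity
    | succ N ih =>
      have hS0 : 0 ≤ ∑ n ∈ Finset.range N, b n := Finset.sum_nonneg fun n _ => hb n
      match N, ih, hS0 with
      | 0, _, _ =>
        simp only [zero_add, Finset.range_one, Finset.sum_singleton, b0]
        rw [le_div_iff₀ hx]; linarith
      | N + 1, ih, hS0 =>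
        have e := key N
        have hsq := sum_antidiagonal_le_sq b hb (N + 1)
        have hsq' : ∑ n ∈ Finset.range N, ∑ p ∈ Finset.HasAntidiagonal.antidiagonal n, b p.1 * b p.2 ≤
            ∑ n ∈ Finset.range (N + 1), ∑ p ∈ Finset.HasAntidiagonal.antidiagonal n, b p.1 * b p.2 := by
          rw [Finset.sum_range_succ]
          have : 0 ≤ ∑ p ∈ Finset.HasAntidiagonal.antidiagonal N, b p.1 * b p.2 :=
            Finset.sum_nonneg fun p _ => mul_nonneg (hb _) (hb _)
          linarith
        have e1 : ∑ n ∈ Finset.range (N + 1), b n = ∑ n ∈ Finset.range N, b (n + 1) + 1 := by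
          rw [Finset.sum_range_succ', b0]
        have e2 : ∑ n ∈ Finset.range (N + 1 + 1), b n =
            ∑ n ∈ Finset.range N, b (n + 2) + 2 / r + 1 := by
          rw [Finset.sum_range_succ', Finset.sum_range_succ', b0, zero_add, b1]
        set T := ∑ n ∈ Finset.range (N + 1), b n
        have hT2 : T ^ 2 ≤ (r / x) ^ 2 := pow_le_pow_left₀ hS0 ih 2
        have hm : (x / r) ^ 2 * ∑ n ∈ Finset.range N,
            ∑ p ∈ Finset.HasAntidiagonal.antidiagonal n, b p.1 * b p.2 ≤ (x / r) ^ 2 * (r / x) ^ 2 :=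
          mul_le_mul_of_nonneg_left (by linarith) (by positivity)
        have hone : (x / r) ^ 2 * (r / x) ^ 2 = 1 := by field_simp
        have hm2 : 2 / r * T ≤ 2 / r * (r / x) := mul_le_mul_of_nonneg_left ih (by positivity)
        have hm3 : 2 / r * (r / x) + 2 = r / x := by rw [hr]; field_simp
        have e3 : ∑ n ∈ Finset.range N, b (n + 1) = T - 1 := by linarith
        rw [e2, e, e3]
        linarith
  have h1 : b n ≤ r / x := by
    refine le_trans ?_ (S (n + 1))
    exact Finset.single_le_sum (f := b) (fun i _ => hb i) (Finset.self_mem_range_succ n)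
  simp only [hbdef] at h1
  rwa [div_le_iff₀ (by positivity)] at h1

/-- For `t` slightly larger than `1 / (2 + 2 x)` the quadratic equation has no real solution. -/
theorem IsMotz.not_summable {x : ℝ} (hx : 0 < x) {Q : ℕ → ℝ} (h : IsMotz (x ^ 2) Q) {t : ℝ}
    (ht : 1 / (2 + 2 * x) < t) (ht2 : t < 1 / 2) : ¬ Summable fun n => Q n * t ^ n := by
  intro hs
  have hy : 0 ≤ x ^ 2 := by positivity
  have ht0 : 0 < t := lt_trans (by positivity) ht
  set c : ℕ → ℝ := fun n => Q n * t ^ n with hc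
  have hcn : ∀ n, 0 ≤ c n := fun n => mul_nonneg (h.pos hy n).le (by positivity)
  have hsn : Summable fun n => ‖c n‖ := hs.norm
  have hprod := tsum_mul_tsum_eq_tsum_sum_antidiagonal_of_summable_norm hsn hsn
  have hps : Summable fun n => ∑ p ∈ Finset.HasAntidiagonal.antidiagonal n, c p.1 * c p.2 :=
    (summable_norm_sum_mul_antidiagonal_of_summable_norm hsn hsn).of_norm
  have c0 : c 0 = 1 := by simp [hc, h.zero]
  have c1 : c 1 = 2 * t := by simp [hc, h.one]
  have cstep : ∀ n, c (n + 2) = 2 * t * c (n + 1) +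
      x ^ 2 * t ^ 2 * ∑ p ∈ Finset.HasAntidiagonal.antidiagonal n, c p.1 * c p.2 := by
    intro n
    have : ∑ p ∈ Finset.HasAntidiagonal.antidiagonal n, c p.1 * c p.2 =
        (∑ p ∈ Finset.HasAntidiagonal.antidiagonal n, Q p.1 * Q p.2) * t ^ n := by
      rw [Finset.sum_mul]
      refine Finset.sum_congr rfl fun p hp => ?_
      rw [Finset.HasAntidiagonal.mem_antidiagonal] at hp
      rw [← hp, pow_add]
      simp only [hc]
      ring
    rw [this]
    simp only [hc]
    rw [h.step]
    ring
  set G := ∑' n, c n with hG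
  have hs1 : Summable fun n => c (n + 1) := (summable_nat_add_iff 1).2 hs
  have e1 : G = 1 + ∑' n, c (n + 1) := by rw [hG, hs.tsum_eq_zero_add, c0]
  have e2 : ∑' n, c (n + 1) = 2 * t + ∑' n, c (n + 2) := by
    rw [hs1.tsum_eq_zero_add, zero_add, c1]
  have e3 : ∑' n, c (n + 2) = 2 * t * ∑' n, c (n + 1) + x ^ 2 * t ^ 2 * (G * G) := by
    rw [hprod, ← tsum_mul_left, ← tsum_mul_left,
      ← (hs1.mul_left (2 * t)).tsum_add (hps.mul_left (x ^ 2 * t ^ 2))]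
    exact tsum_congr cstep
  have e4 : ∑' n, c (n + 1) = G - 1 := by linarith
  have e5 : G = 1 + 2 * t * G + x ^ 2 * t ^ 2 * G ^ 2 := by
    rw [e3, e4] at e2
    linarith
  rw [div_lt_iff₀ (by positivity)] at ht
  have hp : (1 - 2 * t) ^ 2 < (2 * x * t) ^ 2 :=
    pow_lt_pow_left₀ (by linarith) (by linarith) (by norm_num)
  -- `(1 - 2 t)² - 4 x² t² = (2 x² t² G - (1 - 2 t))²` is the discriminant, which is negative here
  nlinarith [sq_nonneg (2 * x ^ 2 * t ^ 2 * G - (1 - 2 * t)), mul_pos (pow_pos hx 2) (pow_pos ht0 2)]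

/-- The exponential growth rate of `Q` is `2 + 2 x`. The limit exists by Fekete's lemma, `IsMotz.le`
bounds it from above, and a smaller limit would make the generating function converge beyond
`1 / (2 + 2 x)`, against `IsMotz.not_summable`. -/
theorem IsMotz.tendsto {x : ℝ} (hx : 0 < x) {Q : ℕ → ℝ} (h : IsMotz (x ^ 2) Q) :
    Tendsto (fun n : ℕ => Real.log (Q n) / n) atTop (nhds (Real.log (2 + 2 * x))) := by
  have hy : 0 ≤ x ^ 2 := by positivity
  set r := 2 + 2 * x with hr
  have hr0 : 0 < r := by positivity
  set u : ℕ → ℝ := fun n => - Real.log (Q n) with hu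
  have hsub : Subadditive u := by
    intro m n
    simp only [hu]
    have h1 := Real.log_le_log (mul_pos (h.pos hy m) (h.pos hy n)) (h.supermul hy m n)
    rw [Real.log_mul (h.pos hy m).ne' (h.pos hy n).ne'] at h1
    linarith
  have hup : ∀ n, Real.log (Q n) ≤ Real.log (r / x) + n * Real.log r := by
    intro n
    have h1 := Real.log_le_log (h.pos hy n) (h.le hx n)
    rwa [Real.log_mul (by positivity) (by positivity), Real.log_pow] at h1
  have hB0 : 0 ≤ Real.log (r / x) := by
    apply Real.log_nonneg
    rw [le_div_iff₀ hx]; linarith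
  have hbdd : BddBelow (Set.range fun n => u n / n) := by
    refine ⟨-(Real.log (r / x) + Real.log r), ?_⟩
    rintro _ ⟨n, rfl⟩
    have hlr : 0 ≤ Real.log r := Real.log_nonneg (by linarith)
    rcases Nat.eq_zero_or_pos n with rfl | hn
    · simp only [Nat.cast_zero, div_zero]; linarith
    · have hn1 : (1 : ℝ) ≤ n := by exact_mod_cast hn
      simp only [hu]
      rw [le_div_iff₀ (by linarith)]
      have := hup n
      nlinarith
  have hlim := hsub.tendsto_lim hbdd
  have hlim' : Tendsto (fun n : ℕ => Real.log (Q n) / n) atTop (nhds (- hsub.lim)) := by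
    refine hlim.neg.congr fun n => ?_
    simp only [hu]; ring
  suffices hsub.lim = - Real.log r by rw [this, neg_neg] at hlim'; exact hlim'
  apply le_antisymm
  · by_contra! hlt
    have hlt' : 1 / r < Real.exp hsub.lim := by
      rw [one_div, ← Real.exp_log (inv_pos.2 hr0), Real.exp_lt_exp, Real.log_inv]
      exact hlt
    have hlt2 : 1 / r < 1 / 2 := one_div_lt_one_div_of_lt (by norm_num) (by linarith)
    obtain ⟨t, ht1, ht2⟩ := exists_between (lt_min hlt' hlt2)
    have ht0 : 0 < t := lt_trans (by positivity) ht1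
    refine h.not_summable hx ht1 (lt_of_lt_of_le ht2 (min_le_right _ _)) ?_
    set q := t / Real.exp hsub.lim with hq
    have hq1 : q < 1 := (div_lt_one (Real.exp_pos _)).2 (lt_of_lt_of_le ht2 (min_le_left _ _))
    have hq0 : 0 ≤ q := by positivity
    refine Summable.of_nonneg_of_le (fun n => mul_nonneg (h.pos hy n).le (by positivity)) ?_
      (summable_geometric_of_lt_one hq0 hq1)
    intro n
    have hQn : Q n ≤ (Real.exp hsub.lim)⁻¹ ^ n := by
      rcases Nat.eq_zero_or_pos n with rfl | hn
      · simp [h.zero]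
      · have h1 := hsub.lim_le_div hbdd hn.ne'
        have hn1 : (0 : ℝ) < n := by exact_mod_cast hn
        rw [le_div_iff₀ hn1] at h1
        rw [← Real.exp_neg, ← Real.exp_nat_mul, ← Real.log_le_iff_le_exp (h.pos hy n)]
        simp only [hu] at h1
        linarith
    calc Q n * t ^ n ≤ (Real.exp hsub.lim)⁻¹ ^ n * t ^ n :=
          mul_le_mul_of_nonneg_right hQn (by positivity)
      _ = q ^ n := by rw [hq, div_eq_mul_inv, mul_pow]; ring
  · have h2 : Tendsto (fun n : ℕ => Real.log (r / x) / n + Real.log r) atTop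
        (nhds (0 + Real.log r)) :=
      (tendsto_const_div_atTop_nhds_zero_nat _).add tendsto_const_nhds
    have h3 := le_of_tendsto_of_tendsto hlim' h2 ?_
    · linarith
    · filter_upwards [eventually_gt_atTop 0] with n hn
      have hn1 : (0 : ℝ) < n := by exact_mod_cast hn
      rw [div_add' _ _ _ hn1.ne']
      gcongr
      have := hup n
      linarith

/-! ### Words and the decomposition at the maximum -/

/-- The one-line word of `σ`, extended by `0` beyond its length. -/
def word {n : ℕ} (σ : Equiv.Perm (Fin n)) (p : ℕ) : ℕ := if h : p < n then (σ ⟨p, h⟩ : ℕ) else 0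

theorem word_coe {n : ℕ} (σ : Equiv.Perm (Fin n)) (p : Fin n) : word σ p = σ p := by
  simp [word]

theorem word_lt {n : ℕ} (σ : Equiv.Perm (Fin n)) {p : ℕ} (h : p < n) : word σ p < n := by
  simp [word, h]

theorem word_inj {n : ℕ} (σ : Equiv.Perm (Fin n)) {p q : ℕ} (hp : p < n) (hq : q < n)
    (h : word σ p = word σ q) : p = q := by
  simp only [word, hp, hq, dif_pos] at h
  simpa using σ.injective (Fin.ext h)

theorem word_ext {n : ℕ} {σ τ : Equiv.Perm (Fin n)} (h : ∀ p < n, word σ p = word τ p) :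
    σ = τ := by
  ext p
  rw [← word_coe, ← word_coe, h p p.2]

/-- Since `σ` is injective, `¬ σ r < σ p` may be replaced by `σ p < σ r`. -/
theorem avoids231_iff {n : ℕ} (σ : Equiv.Perm (Fin n)) :
    Avoids231 σ ↔ ∀ p q r, p < q → q < r → r < n →
      word σ p < word σ q → word σ p < word σ r := by
  constructor
  · intro h p q r hpq hqr hr h1
    by_contra h2
    apply h
    have hne : word σ p ≠ word σ r := fun e => by
      have := word_inj σ (by omega) hr e
      omega
    have hp : p < n := by omega
    have hq : q < n := by omega
    have h3 : word σ r < word σ p := by omega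
    refine ⟨⟨p, hp⟩, ⟨q, hq⟩, ⟨r, hr⟩, hpq, hqr, ?_, ?_⟩
    · simpa [word, hr, hp] using h3
    · simpa [word, hq, hp] using h1
  · rintro h ⟨a, b, c, hab, hbc, h1, h2⟩
    have := h a b c hab hbc c.2
    rw [word_coe, word_coe, word_coe] at this
    have := this h2
    simp only [Fin.lt_def] at *
    omega

/-- The permutation of `Fin n` whose word is `w` on `p < n`, where `w` is injective with values
below `n`. -/
noncomputable def ofWord (n : ℕ) (w : ℕ → ℕ) (hlt : ∀ p < n, w p < n)
    (hinj : ∀ p < n, ∀ q < n, w p = w q → p = q) : Equiv.Perm (Fin n) :=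
  Equiv.ofBijective (fun p => ⟨w p, hlt p p.2⟩)
    (Finite.injective_iff_bijective.1 fun p q h =>
      Fin.ext (hinj p p.2 q q.2 (by simpa using h)))

theorem word_ofWord {n : ℕ} {w : ℕ → ℕ} {hlt hinj} {p : ℕ} (h : p < n) :
    word (ofWord n w hlt hinj) p = w p := by
  simp [word, h, ofWord]

/-- The word `L m R'`, where `m = i + j` is the new maximum and `R'` is `R` shifted up by `i`. -/
def joinWord {i j : ℕ} (L : Equiv.Perm (Fin i)) (R : Equiv.Perm (Fin j)) (p : ℕ) : ℕ :=
  if p < i then word L p else if p = i then i + j else i + word R (p - (i + 1))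

theorem joinWord_left {i j : ℕ} (L : Equiv.Perm (Fin i)) (R : Equiv.Perm (Fin j)) {p : ℕ}
    (h : p < i) : joinWord L R p = word L p := by simp [joinWord, h]

theorem joinWord_mid {i j : ℕ} (L : Equiv.Perm (Fin i)) (R : Equiv.Perm (Fin j)) :
    joinWord L R i = i + j := by simp [joinWord]

theorem joinWord_right {i j : ℕ} (L : Equiv.Perm (Fin i)) (R : Equiv.Perm (Fin j)) (q : ℕ) :
    joinWord L R (i + 1 + q) = i + word R q := by
  have h1 : ¬ (i + 1 + q < i) := by omega
  have h2 : i + 1 + q ≠ i := by omega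
  simp [joinWord, h1, h2]

theorem pos_cases {i j p : ℕ} (h : p < i + j + 1) :
    p < i ∨ p = i ∨ ∃ q < j, p = i + 1 + q := by
  rcases lt_trichotomy p i with h1 | h1 | h1
  · exact Or.inl h1
  · exact Or.inr (Or.inl h1)
  · exact Or.inr (Or.inr ⟨p - (i + 1), by omega, by omega⟩)

/-- The permutation with word `L m R'`; the 231-avoiding permutations with maximum at position `i`
are exactly the `join L R` with `L` and `R` both 231-avoiding. -/
noncomputable def join {i j : ℕ} (L : Equiv.Perm (Fin i)) (R : Equiv.Perm (Fin j)) :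
    Equiv.Perm (Fin (i + j + 1)) :=
  ofWord (i + j + 1) (joinWord L R)
    (by
      intro p hp
      rcases pos_cases hp with h | rfl | ⟨q, hq, rfl⟩
      · rw [joinWord_left L R h]; have := word_lt L h; omega
      · rw [joinWord_mid]; omega
      · rw [joinWord_right]; have := word_lt R hq; omega)
    (by
      intro p hp q hq e
      rcases pos_cases hp with h | rfl | ⟨p, hp', rfl⟩ <;>
      rcases pos_cases hq with h' | rfl | ⟨q, hq', rfl⟩ <;>
      (try simp only [joinWord_mid, joinWord_right] at e) <;>
      (try rw [joinWord_left L R h] at e) <;>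
      (try rw [joinWord_left L R h'] at e) <;>
      (try have a1 := word_lt L h) <;> (try have a2 := word_lt L h') <;>
      (try have a3 := word_lt R hp') <;> (try have a4 := word_lt R hq') <;>
      first
        | exact word_inj L h h' e
        | omega
        | (have := word_inj R hp' hq' (by omega); omega))

theorem word_join {i j : ℕ} (L : Equiv.Perm (Fin i)) (R : Equiv.Perm (Fin j)) {p : ℕ}
    (h : p < i + j + 1) : word (join L R) p = joinWord L R p := word_ofWord h

theorem join_avoids {i j : ℕ} {L : Equiv.Perm (Fin i)} {R : Equiv.Perm (Fin j)}
    (hL : Avoids231 L) (hR : Avoids231 R) : Avoids231 (join L R) := by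
  rw [avoids231_iff] at *
  intro p q r hpq hqr hr e
  rw [word_join L R (by omega), word_join L R (by omega)] at *
  rcases pos_cases (show p < i + j + 1 by omega) with hp | rfl | ⟨p, hp, rfl⟩
  · rcases pos_cases hr with hr' | rfl | ⟨r, hr', rfl⟩
    · rw [joinWord_left L R hp] at *
      rw [joinWord_left L R (by omega)] at *
      exact hL p q r hpq hqr hr' e
    · rw [joinWord_left L R hp, joinWord_mid]
      have := word_lt L hp
      omega
    · rw [joinWord_left L R hp, joinWord_right]
      have := word_lt L hp
      omega
  · obtain ⟨q, rfl⟩ : ∃ q', q = p + 1 + q' := ⟨q - (p + 1), by omega⟩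
    rw [joinWord_mid, joinWord_right] at e
    have := word_lt R (show q < j by omega)
    omega
  · obtain ⟨q, rfl⟩ : ∃ q', q = i + 1 + q' := ⟨q - (i + 1), by omega⟩
    obtain ⟨r, rfl⟩ : ∃ q', r = i + 1 + q' := ⟨r - (i + 1), by omega⟩
    rw [joinWord_right, joinWord_right] at *
    have := hR p q r (by omega) (by omega) (by omega) (by omega)
    omega

theorem join_inj {i j : ℕ} {L L' : Equiv.Perm (Fin i)} {R R' : Equiv.Perm (Fin j)}
    (h : join L R = join L' R') : L = L' ∧ R = R' := by
  constructor
  · refine word_ext fun p hp => ?_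
    rw [← joinWord_left L R hp, ← joinWord_left L' R' hp, ← word_join L R (by omega),
      ← word_join L' R' (by omega), h]
  · refine word_ext fun p hp => ?_
    have := joinWord_right L R p
    have h2 := joinWord_right L' R' p
    rw [← word_join L R (by omega), h, word_join L' R' (by omega)] at this
    omega

/-- The letters left of the maximum of a 231-avoiding permutation are all smaller than those right
of it, so the permutation is a `join`. -/
theorem exists_join {i j : ℕ} {σ : Equiv.Perm (Fin (i + j + 1))} (h : Avoids231 σ)
    (hi : word σ i = i + j) :
    ∃ (L : Equiv.Perm (Fin i)) (R : Equiv.Perm (Fin j)),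
      Avoids231 L ∧ Avoids231 R ∧ join L R = σ := by
  rw [avoids231_iff] at h
  have hmax : ∀ p, p < i + j + 1 → p ≠ i → word σ p < i + j := by
    intro p hp hne
    have h1 := word_lt σ hp
    have h2 : word σ p ≠ word σ i := fun e => hne (word_inj σ hp (by omega) e)
    omega
  have hlr : ∀ p q, p < i → i < q → q < i + j + 1 → word σ p < word σ q := fun p q hp hq hq' =>
    h p i q hp hq hq' (by rw [hi]; exact hmax p (by omega) (by omega))
  -- `word σ p` lies below the `j + 1` values at the positions `i, …, i + j`.
  have hleft : ∀ p < i, word σ p < i := by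
    intro p hp
    have hc := Finset.card_le_card_of_injOn (s := Finset.Ico i (i + j + 1))
      (t := Finset.Ico (word σ p + 1) (i + j + 1)) (word σ)
      (by
        intro q hq
        simp only [Finset.coe_Ico, Set.mem_Ico] at hq ⊢
        refine ⟨?_, word_lt σ hq.2⟩
        rcases Nat.eq_or_lt_of_le hq.1 with rfl | h1
        · rw [hi]; exact hmax p (by omega) (by omega)
        · exact hlr p q hp h1 hq.2)
      (by
        intro a ha b hb e
        simp only [Finset.coe_Ico, Set.mem_Ico] at ha hb
        exact word_inj σ ha.2 hb.2 e)
    simp only [Nat.card_Ico] at hc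
    omega
  -- `word σ q` lies above the `i` values at the positions `0, …, i - 1`.
  have hright : ∀ q, i < q → q < i + j + 1 → i ≤ word σ q := by
    intro q hq hq'
    have hc := Finset.card_le_card_of_injOn (s := Finset.range i)
      (t := Finset.range (word σ q)) (word σ)
      (by
        intro p hp
        simp only [Finset.coe_range, Set.mem_Iio] at hp ⊢
        exact hlr p q hp hq hq')
      (by
        intro a ha b hb e
        simp only [Finset.coe_range, Set.mem_Iio] at ha hb
        exact word_inj σ (by omega) (by omega) e)
    simpa using hc
  let L := ofWord i (word σ) hleft
    (fun p hp q hq e => word_inj σ (by omega) (by omega) e)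
  let R := ofWord j (fun q => word σ (i + 1 + q) - i)
    (fun q hq => by
      have := hmax (i + 1 + q) (by omega) (by omega)
      omega)
    (fun p hp q hq e => by
      have h1 := hright (i + 1 + p) (by omega) (by omega)
      have h2 := hright (i + 1 + q) (by omega) (by omega)
      have := word_inj σ (p := i + 1 + p) (q := i + 1 + q) (by omega) (by omega)
        (by omega)
      omega)
  have hL : ∀ p < i, word L p = word σ p := fun p hp => word_ofWord hp
  have hR : ∀ q < j, word R q = word σ (i + 1 + q) - i := fun q hq => word_ofWord hq
  refine ⟨L, R, ?_, ?_, ?_⟩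
  · rw [avoids231_iff]
    intro p q r hpq hqr hr e
    rw [hL p (by omega)] at *
    rw [hL q (by omega)] at e
    rw [hL r (by omega)]
    exact h p q r hpq hqr (by omega) e
  · rw [avoids231_iff]
    intro p q r hpq hqr hr e
    rw [hR p (by omega)] at *
    rw [hR q (by omega)] at e
    rw [hR r (by omega)]
    have h1 := hright (i + 1 + p) (by omega) (by omega)
    have := h (i + 1 + p) (i + 1 + q) (i + 1 + r) (by omega) (by omega) (by omega) (by omega)
    omega
  · refine word_ext fun p hp => ?_
    rw [word_join L R hp]
    rcases pos_cases hp with h1 | rfl | ⟨q, hq, rfl⟩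
    · rw [joinWord_left L R h1, hL p h1]
    · rw [joinWord_mid, hi]
    · rw [joinWord_right, hR q hq]
      have h1 := hright (i + 1 + q) (by omega) (by omega)
      omega

/-! ### Peaks -/

/-- The number of peaks of the first `n` letters of the word `w`; a peak is recorded at the
position preceding its top. -/
def peaks (w : ℕ → ℕ) (n : ℕ) : ℕ :=
  ∑ p ∈ Finset.range n, if p + 2 < n ∧ w p < w (p + 1) ∧ w (p + 2) < w (p + 1) then 1 else 0

/-- The maximum is a peak unless it is the first or the last letter, and it destroys no peak of `L`
or `R`. -/
theorem peaks_join {i j : ℕ} (L : Equiv.Perm (Fin i)) (R : Equiv.Perm (Fin j)) :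
    peaks (word (join L R)) (i + j + 1) =
      peaks (word L) i + peaks (word R) j + if 0 < i ∧ 0 < j then 1 else 0 := by
  have h0 : peaks (word (join L R)) (i + j + 1) = peaks (joinWord L R) (i + j + 1) := by
    refine Finset.sum_congr rfl fun p hp => ?_
    by_cases hp2 : p + 2 < i + j + 1
    · rw [word_join L R (by omega), word_join L R (by omega), word_join L R (by omega)]
    · simp [hp2]
  have hR : ∀ q, (if i + 1 + q + 2 < i + j + 1 ∧
        joinWord L R (i + 1 + q) < joinWord L R (i + 1 + q + 1) ∧
        joinWord L R (i + 1 + q + 2) < joinWord L R (i + 1 + q + 1) then 1 else 0) =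
      if q + 2 < j ∧ word R q < word R (q + 1) ∧ word R (q + 2) < word R (q + 1)
        then 1 else 0 := by
    intro q
    rw [add_assoc (i + 1) q 2, add_assoc (i + 1) q 1, joinWord_right, joinWord_right,
      joinWord_right]
    congr 1
    simp only [eq_iff_iff]
    constructor <;> rintro ⟨a, b, c⟩ <;> refine ⟨?_, ?_, ?_⟩ <;> omega
  -- the maximum is never followed by an ascent
  have hM : (if i + 2 < i + j + 1 ∧ joinWord L R i < joinWord L R (i + 1) ∧
        joinWord L R (i + 2) < joinWord L R (i + 1) then 1 else 0) = 0 := by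
    rw [if_neg]
    rintro ⟨a, b, -⟩
    have := joinWord_right L R 0
    have h2 := word_lt R (show 0 < j by omega)
    rw [joinWord_mid] at b
    simp only [add_zero] at this
    omega
  have hL : (∑ p ∈ Finset.range i, if p + 2 < i + j + 1 ∧
        joinWord L R p < joinWord L R (p + 1) ∧
        joinWord L R (p + 2) < joinWord L R (p + 1) then 1 else 0) =
      peaks (word L) i + if 0 < i ∧ 0 < j then 1 else 0 := by
    unfold peaks
    rcases i with _ | i
    · simp
    rw [Finset.sum_range_succ, Finset.sum_range_succ]
    have e1 : ∀ p ∈ Finset.range i, (if p + 2 < i + 1 + j + 1 ∧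
        joinWord L R p < joinWord L R (p + 1) ∧
        joinWord L R (p + 2) < joinWord L R (p + 1) then 1 else 0) =
        if p + 2 < i + 1 ∧ word L p < word L (p + 1) ∧ word L (p + 2) < word L (p + 1)
          then 1 else 0 := by
      intro p hp
      rw [Finset.mem_range] at hp
      rw [joinWord_left L R (show p < i + 1 by omega),
        joinWord_left L R (show p + 1 < i + 1 by omega)]
      rcases Nat.lt_or_ge (p + 2) (i + 1) with h | h
      · rw [joinWord_left L R h]
        have : p + 2 < i + 1 + j + 1 := by omega
        simp [h, this]
      · obtain rfl : p + 1 = i := by omega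
        rw [joinWord_mid]
        have := word_lt L (show p + 1 < p + 1 + 1 by omega)
        rw [if_neg (by omega), if_neg (by omega)]
    rw [Finset.sum_congr rfl e1, joinWord_mid, joinWord_left L R (show i < i + 1 by omega),
      if_neg (show ¬ (i + 2 < i + 1 ∧ _) by omega)]
    have := word_lt L (show i < i + 1 by omega)
    have h2 := joinWord_right L R 0
    simp only [add_zero] at h2
    rw [show i + 2 = i + 1 + 1 by ring, h2]
    by_cases hj : 0 < j
    · have h3 := word_lt R hj
      rw [if_pos (by omega), if_pos (by omega)]
    · rw [if_neg (by omega), if_neg (by omega)]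
  rw [h0]
  conv_lhs => unfold peaks
  rw [show i + j + 1 = i + 1 + j by ring, Finset.sum_range_add, Finset.sum_range_succ,
    ← show i + j + 1 = i + 1 + j by ring, hL, hM, Finset.sum_congr rfl fun q _ => hR q]
  unfold peaks
  ring

theorem peaks_eq_card (w : ℕ → ℕ) (n : ℕ) : peaks w n = (Finset.range n |>.filter
    fun p => p + 2 < n ∧ w p < w (p + 1) ∧ w (p + 2) < w (p + 1)).card := by
  rw [peaks, Finset.card_filter]

theorem peaks_of_le_two (w : ℕ → ℕ) {n : ℕ} (h : n ≤ 2) : peaks w n = 0 :=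
  Finset.sum_eq_zero fun p _ => if_neg (by omega)

theorem peaks_succ (w : ℕ → ℕ) (m : ℕ) : peaks w (m + 3) =
    peaks w (m + 2) + if w m < w (m + 1) ∧ w (m + 2) < w (m + 1) then 1 else 0 := by
  have e : ∀ p ∈ Finset.range m,
      (if p + 2 < m + 3 ∧ w p < w (p + 1) ∧ w (p + 2) < w (p + 1) then 1 else 0) =
      if p + 2 < m + 2 ∧ w p < w (p + 1) ∧ w (p + 2) < w (p + 1) then 1 else 0 := by
    intro p hp
    rw [Finset.mem_range] at hp
    have h1 : p + 2 < m + 3 := by omega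
    have h2 : p + 2 < m + 2 := by omega
    simp [h1, h2]
  unfold peaks
  rw [Finset.sum_range_succ, Finset.sum_range_succ, Finset.sum_range_succ,
    Finset.sum_range_succ, Finset.sum_range_succ, Finset.sum_congr rfl e]
  simp

/-- Between two letters that are both smaller than some letter in between there is a peak. -/
theorem exists_peak {w : ℕ → ℕ} {n : ℕ} (hw : ∀ p < n, ∀ q < n, w p = w q → p = q)
    {x y z : ℕ} (hxy : x < y) (hyz : y < z) (hz : z < n) (h1 : w x < w y) (h2 : w z < w y) :
    ∃ p, x ≤ p ∧ p + 2 ≤ z ∧ w p < w (p + 1) ∧ w (p + 2) < w (p + 1) := by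
  obtain ⟨t, ht, hmax⟩ := Finset.exists_max_image (Finset.Icc x z) w
    ⟨x, by rw [Finset.mem_Icc]; omega⟩
  rw [Finset.mem_Icc] at ht
  have hy := hmax y (by rw [Finset.mem_Icc]; omega)
  have hx' : t ≠ x := by rintro rfl; omega
  have hz' : t ≠ z := by rintro rfl; omega
  obtain ⟨p, rfl⟩ : ∃ p, t = p + 1 := ⟨t - 1, by omega⟩
  have a1 := hmax p (by rw [Finset.mem_Icc]; omega)
  have a2 := hmax (p + 2) (by rw [Finset.mem_Icc]; omega)
  have b1 : w p ≠ w (p + 1) := fun e => by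
    have := hw p (by omega) (p + 1) (by omega) e
    omega
  have b2 : w (p + 2) ≠ w (p + 1) := fun e => by
    have := hw (p + 2) (by omega) (p + 1) (by omega) e
    omega
  exact ⟨p, by omega, by omega, by omega, by omega⟩

/-! ### Longest alternating subsequences and peaks -/

/-- The positions `g 0 < ⋯ < g (k - 1)` carry an alternating subsequence of the word `w`. -/
def IsAltWord (w g : ℕ → ℕ) (k : ℕ) : Prop :=
  (∀ i j, i < j → j < k → g i < g j) ∧
    ∀ j, j + 2 < k → (w (g j) < w (g (j + 1)) ↔ ¬ w (g (j + 1)) < w (g (j + 2)))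

/-- Every second step of an alternating subsequence starting from some ascent straddles a peak,
and peaks for different steps differ. -/
theorem IsAltWord.le_peaks {w g : ℕ → ℕ} {n k : ℕ}
    (hw : ∀ p < n, ∀ q < n, w p = w q → p = q) (h : IsAltWord w g k) (hg : ∀ j < k, g j < n) :
    k ≤ 2 * peaks w n + 3 := by
  obtain ⟨hmono, halt⟩ := h
  -- `c = 0` or `c = 1` according to whether the first step is an ascent or a descent
  obtain ⟨c, hc, hasc⟩ : ∃ c ≤ 1, c + 2 < k → w (g c) < w (g (c + 1)) := by
    by_cases h0 : w (g 0) < w (g 1)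
    · exact ⟨0, by omega, fun _ => h0⟩
    · refine ⟨1, le_rfl, fun hk => ?_⟩
      have := halt 0 (by omega)
      by_contra h1
      exact h0 (this.2 h1)
  have hasc' : ∀ s, 2 * s + c + 2 < k → w (g (2 * s + c)) < w (g (2 * s + c + 1)) := by
    intro s
    induction s with
    | zero => intro hk; simpa using hasc (by omega)
    | succ s ih =>
      intro hk
      have h1 := (halt (2 * s + c) (by omega)).1 (ih (by omega))
      have h2 := halt (2 * s + c + 1) (by omega)
      by_contra h3
      rw [show 2 * (s + 1) + c = 2 * s + c + 1 + 1 by ring] at h3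
      exact h1 (h2.2 h3)
  have hpk : ∀ s, ∃ p, 2 * s + c + 2 < k →
      g (2 * s + c) ≤ p ∧ p + 2 ≤ g (2 * s + c + 2) ∧ w p < w (p + 1) ∧ w (p + 2) < w (p + 1) := by
    intro s
    by_cases hk : 2 * s + c + 2 < k
    · have h1 := (halt (2 * s + c) (by omega)).1 (hasc' s hk)
      have h2 : w (g (2 * s + c + 2)) ≠ w (g (2 * s + c + 1)) := fun e => by
        have := hw _ (hg _ (by omega)) _ (hg _ (by omega)) e
        have := hmono (2 * s + c + 1) (2 * s + c + 2) (by omega) (by omega)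
        omega
      obtain ⟨p, hp⟩ := exists_peak hw (hmono (2 * s + c) (2 * s + c + 1) (by omega) (by omega))
        (hmono (2 * s + c + 1) (2 * s + c + 2) (by omega) (by omega)) (hg _ (by omega))
        (hasc' s hk) (by omega)
      exact ⟨p, fun _ => hp⟩
    · exact ⟨0, fun hk' => absurd hk' hk⟩
  choose q hq using hpk
  have hcard := Finset.card_le_card_of_injOn (s := Finset.range ((k - 1 - c) / 2))
    (t := (Finset.range n).filter
      fun p => p + 2 < n ∧ w p < w (p + 1) ∧ w (p + 2) < w (p + 1)) q
    (by
      intro s hs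
      simp only [Finset.coe_range, Set.mem_Iio] at hs
      have hk : 2 * s + c + 2 < k := by omega
      obtain ⟨-, h2, h3, h4⟩ := hq s hk
      have := hg _ hk
      simp only [Finset.coe_filter, Finset.mem_range, Set.mem_ofPred_eq]
      exact ⟨by omega, by omega, h3, h4⟩)
    (by
      have hlt : ∀ s t, s < t → 2 * t + c + 2 < k → q s < q t := by
        intro s t hst ht
        have h1 := hq s (by omega)
        have h2 := hq t ht
        have h3 : g (2 * s + c + 2) ≤ g (2 * t + c) := by
          rcases Nat.eq_or_lt_of_le (show s + 1 ≤ t from hst) with rfl | h3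
          · rw [show 2 * (s + 1) + c = 2 * s + c + 2 by ring]
          · exact (hmono _ _ (by omega) (by omega)).le
        omega
      intro s hs t ht e
      simp only [Finset.coe_range, Set.mem_Iio] at hs ht
      rcases lt_trichotomy s t with h1 | h1 | h1
      · have := hlt s t h1 (by omega); omega
      · exact h1
      · have := hlt t s h1 (by omega); omega)
  rw [← peaks_eq_card, Finset.card_range] at hcard
  omega

/-- Extending an alternating subsequence after a turn. -/
theorem IsAltWord.append {w g : ℕ → ℕ} {l m : ℕ} (h : IsAltWord w g (l + 2))
    (hm : g (l + 1) < m) (hw : w (g l) < w (g (l + 1)) ↔ ¬ w (g (l + 1)) < w m) :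
    IsAltWord w (Function.update g (l + 2) m) (l + 3) := by
  have hlt : ∀ j, j < l + 2 → Function.update g (l + 2) m j = g j := fun j hj =>
    Function.update_of_ne (by omega) _ _
  have heq : Function.update g (l + 2) m (l + 2) = m := Function.update_self ..
  refine ⟨fun i j hij hj => ?_, fun j hj => ?_⟩
  · rw [hlt i (by omega)]
    rcases Nat.lt_or_ge j (l + 2) with h1 | h1
    · rw [hlt j h1]; exact h.1 i j hij h1
    · obtain rfl : j = l + 2 := by omega
      rw [heq]
      rcases Nat.lt_or_ge i (l + 1) with h2 | h2
      · exact (h.1 i (l + 1) h2 (by omega)).trans hm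
      · obtain rfl : i = l + 1 := by omega
        exact hm
  · rw [hlt j (by omega), hlt (j + 1) (by omega)]
    rcases Nat.lt_or_ge j l with h1 | h1
    · rw [hlt (j + 2) (by omega)]; exact h.2 j (by omega)
    · obtain rfl : j = l := by omega
      rw [heq]; exact hw

/-- Moving the end of an alternating subsequence without changing its last direction. -/
theorem IsAltWord.replace {w g : ℕ → ℕ} {l m : ℕ} (h : IsAltWord w g (l + 2))
    (hm : g (l + 1) ≤ m) (hw : w (g l) < w (g (l + 1)) ↔ w (g l) < w m) :
    IsAltWord w (Function.update g (l + 1) m) (l + 2) := by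
  have hlt : ∀ j, j < l + 1 → Function.update g (l + 1) m j = g j := fun j hj =>
    Function.update_of_ne (by omega) _ _
  have heq : Function.update g (l + 1) m (l + 1) = m := Function.update_self ..
  refine ⟨fun i j hij hj => ?_, fun j hj => ?_⟩
  · rw [hlt i (by omega)]
    rcases Nat.lt_or_ge j (l + 1) with h1 | h1
    · rw [hlt j h1]; exact h.1 i j hij (by omega)
    · obtain rfl : j = l + 1 := by omega
      rw [heq]
      exact (h.1 i (l + 1) hij (by omega)).trans_le hm
  · rw [hlt j (by omega), hlt (j + 1) (by omega)]
    rcases Nat.lt_or_ge (j + 1) l with h1 | h1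
    · rw [hlt (j + 2) (by omega)]; exact h.2 j (by omega)
    · obtain rfl : l = j + 1 := by omega
      rw [heq, ← hw]; exact h.2 j (by omega)

/-- A greedy scan of the word: at a turn the new letter is appended, otherwise it replaces the last
letter chosen. The resulting alternating subsequence ends at the last letter, in the direction of
the last step. If that step is an ascent, all peaks found so far are followed by a valley, hence
the stronger bound in this case. -/
theorem exists_altWord {w : ℕ → ℕ} {n : ℕ} (hw : ∀ p < n, ∀ q < n, w p = w q → p = q) (m : ℕ)
    (hm : m + 1 < n) : ∃ l g, IsAltWord w g (l + 2) ∧ g (l + 1) = m + 1 ∧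
      ((w m < w (m + 1) ∧ w (g l) < w (m + 1) ∧ 2 * peaks w (m + 2) + 2 ≤ l + 2) ∨
       (w (m + 1) < w m ∧ w (m + 1) < w (g l) ∧ 2 * peaks w (m + 2) + 1 ≤ l + 2)) := by
  induction m with
  | zero =>
    refine ⟨0, id, ⟨fun i j hij _ => hij, fun j hj => by omega⟩, rfl, ?_⟩
    have hne : w 0 ≠ w 1 := fun e => by
      have := hw 0 (by omega) 1 (by omega) e
      omega
    simp only [id, zero_add, peaks_of_le_two w le_rfl]
    omega
  | succ m ih =>
    obtain ⟨l, g, hg, hl, hcase⟩ := ih (by omega)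
    have hne : w (m + 1) ≠ w (m + 2) := fun e => by
      have := hw (m + 1) (by omega) (m + 2) (by omega) e
      omega
    have hps := peaks_succ w m
    rw [show m + 1 + 1 = m + 2 from rfl, show m + 1 + 2 = m + 3 from rfl]
    have hA : (w (g l) < w (m + 1) ↔ ¬ w (m + 1) < w (m + 2)) → IsAltWord w
        (Function.update g (l + 2) (m + 2)) (l + 1 + 2) := fun h =>
      hg.append (by omega) (by rw [hl]; exact h)
    have hR : (w (g l) < w (m + 1) ↔ w (g l) < w (m + 2)) → IsAltWord w
        (Function.update g (l + 1) (m + 2)) (l + 2) := fun h =>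
      hg.replace (by omega) (by rw [hl]; exact h)
    have uA : Function.update g (l + 2) (m + 2) (l + 1) = m + 1 := by
      rw [Function.update_of_ne (by omega), hl]
    have uR : Function.update g (l + 1) (m + 2) l = g l :=
      Function.update_of_ne (by omega) _ _
    rcases hcase with ⟨h1, h2, h3⟩ | ⟨h1, h2, h3⟩ <;> rcases Nat.lt_or_gt_of_ne hne with h4 | h4
    · refine ⟨l, _, hR (by omega), Function.update_self .., Or.inl ?_⟩
      rw [uR]
      rw [if_neg (by omega)] at hps
      exact ⟨h4, by omega, by omega⟩
    · refine ⟨l + 1, _, hA (by omega), Function.update_self .., Or.inr ?_⟩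
      rw [uA]
      rw [if_pos (by omega)] at hps
      exact ⟨h4, by omega, by omega⟩
    · refine ⟨l + 1, _, hA (by omega), Function.update_self .., Or.inl ?_⟩
      rw [uA]
      rw [if_neg (by omega)] at hps
      exact ⟨h4, by omega, by omega⟩
    · refine ⟨l, _, hR (by omega), Function.update_self .., Or.inr ?_⟩
      rw [uR]
      rw [if_neg (by omega)] at hps
      exact ⟨h4, by omega, by omega⟩

theorem altLen_le {n : ℕ} (σ : Equiv.Perm (Fin n)) : altLen σ ≤ 2 * peaks (word σ) n + 3 := by
  refine csSup_le ⟨0, Fin.elim0, fun i => i.elim0, fun j h => by omega⟩ ?_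
  rintro k ⟨f, hf, halt⟩
  let g : ℕ → ℕ := fun j => if h : j < k then (f ⟨j, h⟩ : ℕ) else 0
  have hgf : ∀ j (h : j < k), g j = f ⟨j, h⟩ := fun j h => by simp [g, h]
  refine IsAltWord.le_peaks (g := g) (fun p hp q hq => word_inj σ hp hq) ⟨?_, ?_⟩ ?_
  · intro i j hij hj
    rw [hgf i (by omega), hgf j hj]
    exact hf (show (⟨i, _⟩ : Fin k) < ⟨j, _⟩ from hij)
  · intro j hj
    rw [hgf j (by omega), hgf (j + 1) (by omega), hgf (j + 2) hj, word_coe, word_coe, word_coe]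
    exact halt j hj
  · intro j hj
    rw [hgf j hj]
    exact (f _).2

theorem le_altLen {n : ℕ} (σ : Equiv.Perm (Fin n)) : 2 * peaks (word σ) n ≤ altLen σ := by
  rcases Nat.lt_or_ge n 2 with hn | hn
  · rw [peaks_of_le_two _ hn.le]; exact Nat.zero_le _
  obtain ⟨m, rfl⟩ : ∃ m, n = m + 2 := ⟨n - 2, by omega⟩
  obtain ⟨l, g, ⟨hmono, halt⟩, hl, hc⟩ := exists_altWord (w := word σ)
    (fun p hp q hq => word_inj σ hp hq) m (Nat.lt_succ_self _)
  have hg : ∀ j, j < l + 2 → g j < m + 2 := by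
    intro j hj
    rcases Nat.lt_or_ge j (l + 1) with h1 | h1
    · have := hmono j (l + 1) h1 (by omega); omega
    · obtain rfl : j = l + 1 := by omega
      omega
  have hbdd : BddAbove {k | ∃ f : Fin k → Fin (m + 2), IsAltSub σ f} := by
    refine ⟨m + 2, ?_⟩
    rintro k ⟨f, hf, -⟩
    simpa using Fintype.card_le_of_injective f hf.injective
  refine le_trans (show 2 * peaks (word σ) (m + 2) ≤ l + 2 by omega) (le_csSup hbdd ?_)
  refine ⟨fun j => ⟨g j, hg j j.2⟩, fun i j hij => hmono i j hij j.2, fun j hj => ?_⟩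
  have := halt j hj
  have e : ∀ j (h : j < l + 2), word σ (g j) = σ ⟨g j, hg j h⟩ := fun j h =>
    word_coe σ ⟨g j, hg j h⟩
  rw [e j (by omega), e (j + 1) (by omega), e (j + 2) hj] at this
  exact this

/-! ### Generating polynomials -/

open scoped Classical in
/-- The generating polynomial of the number of peaks over 231-avoiding permutations. -/
noncomputable def peakGF (y : ℝ) (n : ℕ) : ℝ :=
  ∑ σ ∈ Finset.univ.filter (fun σ : Equiv.Perm (Fin n) => Avoids231 σ), y ^ peaks (word σ) n

theorem peakGF_zero (y : ℝ) : peakGF y 0 = 1 := by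
  have : ∀ σ : Equiv.Perm (Fin 0), Avoids231 σ := fun σ ⟨i, _⟩ => i.elim0
  simp [peakGF, this, peaks]

/-- Splitting a 231-avoiding permutation at its maximum. -/
theorem peakGF_succ (y : ℝ) (n : ℕ) : peakGF y (n + 1) =
    ∑ p ∈ Finset.HasAntidiagonal.antidiagonal n,
      (if 0 < p.1 ∧ 0 < p.2 then y else 1) * (peakGF y p.1 * peakGF y p.2) := by
  classical
  have hpos : ∀ σ : Equiv.Perm (Fin (n + 1)), (σ.symm (Fin.last n) : ℕ) ≤ n := fun σ => by
    have := (σ.symm (Fin.last n)).2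
    omega
  rw [peakGF, ← Finset.sum_fiberwise_of_maps_to
    (t := Finset.HasAntidiagonal.antidiagonal n)
    (g := fun σ => ((σ.symm (Fin.last n) : ℕ), n - (σ.symm (Fin.last n) : ℕ)))
    (fun σ _ => by
      rw [Finset.HasAntidiagonal.mem_antidiagonal]
      have := hpos σ
      simp only
      omega)]
  refine Finset.sum_congr rfl ?_
  rintro ⟨i, j⟩ hij
  rw [Finset.HasAntidiagonal.mem_antidiagonal] at hij
  simp only at hij
  subst hij
  have hkey : ∀ σ : Equiv.Perm (Fin (i + j + 1)),
      (((σ.symm (Fin.last (i + j)) : ℕ), i + j - (σ.symm (Fin.last (i + j)) : ℕ)) = (i, j)) ↔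
        word σ i = i + j := by
    intro σ
    have e : word σ i = σ ⟨i, by omega⟩ := word_coe σ ⟨i, by omega⟩
    rw [e, Prod.mk.injEq]
    constructor
    · rintro ⟨h, -⟩
      have : σ.symm (Fin.last (i + j)) = ⟨i, by omega⟩ := Fin.ext h
      rw [← this]; simp
    · intro h
      have : σ ⟨i, by omega⟩ = Fin.last (i + j) := Fin.ext h
      rw [← this]; simp
  simp only [peakGF]
  rw [Finset.sum_mul_sum, ← Finset.sum_product', Finset.mul_sum]
  symm
  refine Finset.sum_nbij (fun x => join x.1 x.2) ?_ ?_ ?_ ?_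
  · rintro ⟨L, R⟩ h
    simp only [Finset.mem_product, Finset.mem_filter, Finset.mem_univ, true_and] at h ⊢
    refine ⟨join_avoids h.1 h.2, (hkey _).2 ?_⟩
    rw [word_join L R (by omega), joinWord_mid]
  · rintro ⟨L, R⟩ _ ⟨L', R'⟩ _ h
    obtain ⟨rfl, rfl⟩ := join_inj h
    rfl
  · intro σ h
    simp only [Finset.coe_filter, Finset.mem_filter, Finset.mem_univ, true_and,
      Set.mem_ofPred_eq] at h
    obtain ⟨L, R, hL, hR, rfl⟩ := exists_join h.1 ((hkey σ).1 h.2)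
    exact ⟨(L, R), by simp [hL, hR], rfl⟩
  · rintro ⟨L, R⟩ _
    simp only
    rw [peaks_join, pow_add, pow_add]
    split_ifs <;> ring

theorem sum_antidiagonal_ends (f : ℕ × ℕ → ℝ) (n : ℕ) :
    ∑ p ∈ Finset.HasAntidiagonal.antidiagonal (n + 2), f p =
      f (0, n + 2) + f (n + 2, 0) +
        ∑ p ∈ Finset.HasAntidiagonal.antidiagonal n, f (p.1 + 1, p.2 + 1) := by
  rw [Finset.Nat.antidiagonal_succ_succ']
  simp [add_assoc]
  rfl

theorem isMotz_peakGF (y : ℝ) : IsMotz y fun n => peakGF y (n + 1) where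
  zero := by simp [peakGF_succ, peakGF_zero]
  one := by
    simp [peakGF_succ, peakGF_zero, Finset.Nat.antidiagonal_succ]
    norm_num
  step n := by
    rw [peakGF_succ, sum_antidiagonal_ends, Finset.mul_sum]
    simp only [peakGF_zero, lt_irrefl, false_and, and_false, if_false, Nat.succ_pos, and_self,
      if_true]
    ring

/-- The Catalan numbers are the case `y = 1`, so `catalan n` grows like `4 ^ n`. -/
theorem isMotz_catalan : IsMotz (1 ^ 2) fun n => (catalan (n + 1) : ℝ) where
  zero := by simp
  one := by simp [catalan_two]
  step n := by
    have h : (catalan (n + 2 + 1) : ℝ) = ∑ p ∈ Finset.HasAntidiagonal.antidiagonal (n + 2),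
        (catalan p.1 : ℝ) * catalan p.2 := by
      rw [catalan_succ']; push_cast; rfl
    rw [h, sum_antidiagonal_ends]
    simp only [catalan_zero]
    push_cast
    ring

/-- `A` is twice the number of peaks, up to an error in `[0, 3]`. -/
theorem exp_altLen_bounds (lam : ℝ) {n : ℕ} (σ : Equiv.Perm (Fin n)) :
    Real.exp (-(3 * |lam|)) * (Real.exp lam ^ 2) ^ peaks (word σ) n ≤
        Real.exp (lam * altLen σ) ∧
      Real.exp (lam * altLen σ) ≤
        Real.exp (3 * |lam|) * (Real.exp lam ^ 2) ^ peaks (word σ) n := by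
  have h1 : (2 * peaks (word σ) n : ℝ) ≤ altLen σ := by exact_mod_cast le_altLen σ
  have h2 : (altLen σ : ℝ) ≤ 2 * peaks (word σ) n + 3 := by exact_mod_cast altLen_le σ
  rw [← pow_mul, ← Real.exp_nat_mul, ← Real.exp_add, ← Real.exp_add, Real.exp_le_exp,
    Real.exp_le_exp]
  push_cast
  have h3 : |lam * (altLen σ - 2 * peaks (word σ) n)| ≤ |lam| * 3 := by
    rw [abs_mul]
    refine mul_le_mul_of_nonneg_left ?_ (abs_nonneg _)
    rw [abs_le]
    constructor <;> linarith
  rw [abs_le] at h3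
  constructor <;> nlinarith [h3.1, h3.2]

theorem Malt_bounds (lam : ℝ) (n : ℕ) :
    Real.exp (-(3 * |lam|)) * (peakGF (Real.exp lam ^ 2) n / catalan n) ≤ Malt n lam ∧
      Malt n lam ≤ Real.exp (3 * |lam|) * (peakGF (Real.exp lam ^ 2) n / catalan n) := by
  rw [Malt, peakGF, ← mul_div_assoc, ← mul_div_assoc, Finset.mul_sum, Finset.mul_sum]
  constructor <;> gcongr with σ
  · exact (exp_altLen_bounds lam σ).1
  · exact (exp_altLen_bounds lam σ).2

/-! ### The limit -/

/-- `limₙ (1/n) log E[e^{λ Aₙ}] = log(e^λ + 1) - log 2` under the uniform 231-avoiding measure. -/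
theorem altLen_mgf_limit (lam : ℝ) :
    Filter.Tendsto (fun n : ℕ => (1 / (n : ℝ)) * Real.log (Malt n lam)) Filter.atTop
      (nhds (Real.log (Real.exp lam + 1) - Real.log 2)) := by
  have hx : 0 < Real.exp lam := Real.exp_pos lam
  set Q : ℕ → ℝ := fun n => peakGF (Real.exp lam ^ 2) (n + 1) with hQ
  set C : ℕ → ℝ := fun n => (catalan (n + 1) : ℝ) with hC
  have hMQ : IsMotz (Real.exp lam ^ 2) Q := isMotz_peakGF _
  have hMC : IsMotz (1 ^ 2) C := isMotz_catalan
  have hQpos := hMQ.pos (by positivity)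
  have hCpos := hMC.pos (by positivity)
  have hbound : ∀ n, |Real.log (Malt (n + 1) lam) - (Real.log (Q n) - Real.log (C n))| ≤
      3 * |lam| := by
    intro n
    obtain ⟨h1, h2⟩ := Malt_bounds lam (n + 1)
    have hd : 0 < Q n / C n := div_pos (hQpos n) (hCpos n)
    have hlow : 0 < Real.exp (-(3 * |lam|)) * (Q n / C n) := mul_pos (Real.exp_pos _) hd
    have l1 := Real.log_le_log hlow h1
    have l2 := Real.log_le_log (hlow.trans_le h1) h2
    rw [Real.log_mul (Real.exp_pos _).ne' hd.ne', Real.log_exp,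
      Real.log_div (hQpos n).ne' (hCpos n).ne'] at l1
    change _ ≤ Real.log (_ * (Q n / C n)) at l2
    rw [Real.log_mul (Real.exp_pos _).ne' hd.ne', Real.log_exp,
      Real.log_div (hQpos n).ne' (hCpos n).ne'] at l2
    rw [abs_le]
    constructor <;> linarith
  -- `Q` and `C` carry an index shift: `Q n` and `C n` belong to permutations of length `n + 1`
  rw [← tendsto_add_atTop_iff_nat 1]
  have hlim := (hMQ.tendsto hx).sub (hMC.tendsto one_pos)
  have hratio : Tendsto (fun n : ℕ => (n : ℝ) / ((n : ℝ) + 1)) atTop (nhds 1) :=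
    tendsto_natCast_div_add_atTop 1
  have hmain := hlim.mul hratio
  have herr : Tendsto (fun n : ℕ => (Real.log (Malt (n + 1) lam) -
      (Real.log (Q n) - Real.log (C n))) / ((n : ℝ) + 1)) atTop (nhds 0) := by
    have h0 : Tendsto (fun n : ℕ => 3 * |lam| * (1 / ((n : ℝ) + 1))) atTop (nhds 0) := by
      simpa using tendsto_one_div_add_atTop_nhds_zero_nat.const_mul (3 * |lam|)
    refine squeeze_zero_norm (fun n => ?_) h0
    have hn : (0 : ℝ) < (n : ℝ) + 1 := by positivity
    rw [Real.norm_eq_abs, abs_div, abs_of_pos hn, mul_one_div]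
    gcongr
    exact hbound n
  have hconst : (Real.log (2 + 2 * Real.exp lam) - Real.log (2 + 2 * 1)) * 1 + 0 =
      Real.log (Real.exp lam + 1) - Real.log 2 := by
    rw [show 2 + 2 * Real.exp lam = 2 * (Real.exp lam + 1) by ring,
      show (2 + 2 * 1 : ℝ) = 2 * 2 by norm_num,
      Real.log_mul (by norm_num) (by positivity), Real.log_mul (by norm_num) (by norm_num)]
    ring
  rw [← hconst]
  refine (hmain.add herr).congr' ?_
  filter_upwards [eventually_gt_atTop 0] with n hn
  have hn0 : (n : ℝ) ≠ 0 := by exact_mod_cast hn.ne'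
  have hn1 : (n : ℝ) + 1 ≠ 0 := by positivity
  push_cast
  field_simp
  ring
end
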